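/- Bias–variance of subsampled OLS under SRHT (Corollary 4.7): There exist absolute constants C > 0 and C' > 0 such that the following holds. Let n ≥ p ≥ 1 with n ≥ 3, let X ∈ ℝ^{n×p} have Xᵀ X invertible, let y ∈ ℝⁿ, let H ∈ ℝ^{n×n} be a Hadamard matrix, and let α > 0 be such that for every sign vector ξ, every nonzero row of X_HD(ξ) = H D(ξ) X/√n satisfies ‖(X_HD(ξ))_i‖² / ‖X_HD(ξ)‖_F² ≥ n^{−α}. For every δ with n·exp(−p) < δ ≤ n^{−(3+α)} and every m with m ≥ C · p · log(p/δ), there exists an event ζ ⊆ Ω × Ξ with P(ζ) ≥ 1 − δ such that the inverted Gram matrices are invertible on ζ and Bias_ζ(β̃_SRHT) ≤ ε² · ‖r‖² and |Var_ζ(β̃_SRHT) − (p/m) · ‖r‖²| ≤ ε · ‖r‖², where ε = C' · ((log n / log log n) · √(p³/m³) + √(p · log(n/δ))/m). -/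

import Mathlib

/-!
Write `Q = H D(ξ) / √n`, which is orthogonal, and choose `G` invertible with `Gᵀ Xᵀ X G = 1`
(`exists_whiten`).  The rows `u_i` of `U = Q X G` satisfy `∑ u_i u_iᵀ = 1`, and the rotated residual
`Q r` satisfies `∑ (Q r)_i u_i = 0`.  Uniform sampling replaces the Gram matrix and the moment vector
by `W = m⁻¹ ∑_s n u_{ω s} u_{ω s}ᵀ` and `v = m⁻¹ ∑_s n (Q r)_{ω s} u_{ω s}`, and the
estimator is `β_OLS + G γ` with `γ = W⁻¹ v` (`betaSRHT_whiten`).  Its loss is `‖r‖² + ‖γ‖²`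
(`lossL_whiten`), so conditionally on `ζ` the bias is `‖E_ζ γ‖²` and the variance is `E_ζ ‖γ‖²`.

**Signs.**  `n ‖u_i‖²` is the quadratic form `‖∑_j ξ_j w_j‖²`, where `∑ w_j w_jᵀ = 1`, of mean `p`.
Its two exponential moments are bounded by averaging over one sign at a time, a rank-one update of
the matrix of the form paying for each step (`ER_exp_quad`, `ER_exp_neg_quad`, `ER_mgf`).  With
`L = log (n/δ)`, which is at most `p` because `n e^{-p} < δ`, all leverages satisfy
`|n ‖u_i‖² - p| ≤ σ = 13 √(p L)` outside an event of probability at most `δ/2`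
(`ER_tail`, `ER_levGood`).  In particular `n ‖u_i‖² ≤ 14 p`.

**Invertibility.**  For such signs `W ⪰ 1/2` outside an event of probability at most
`p exp(-m/(196 p))`, by a matrix Chernoff bound (`chernoff`).  Each draw lowers the expected trace
exponential of `-θ ∑ n u uᵀ` by a fixed factor; the one-step estimate `trace_expS_step` uses
Klein's inequality `Tr e^B + Tr e^B (A - B) ≤ Tr e^A` (`klein_exp`) and the comparison
`Tr (e^A - e^B)(A - B) ≤ ½ Tr (e^A + e^B)(A - B)²` (`exp_trace_diff`), both obtained by expanding in
two eigenbases and using a scalar inequality for each pair of eigenvalues.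

**Fixed signs.**  Put `E = W - 1`.  On `W ⪰ 1/2`, `γ = v - E v + E W⁻¹ E v`.  The mean of `v`
vanishes, and the mean of `E v` is `m⁻¹ ∑ (Q r)_i (n ‖u_i‖² - p) u_i`: the constant `p` may be
subtracted because `∑ (Q r)_i u_i = 0`, so this vector has norm at most `σ ‖r‖ / m`.  The
expectations of `‖E x‖²` and `‖E v‖²` are of orders `(p/m) ‖x‖²` and `(p/m)² ‖r‖²`, hence
the last term contributes order `(p/m)^{3/2} ‖r‖` (`Flat.bias`).  Likewise `E ‖v‖²` equals
`(p/m) ‖r‖²` up to `(σ/m) ‖r‖²`, and replacing `v` by `γ` costs `(p/m)^{3/2} ‖r‖²`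
(`Flat.variance`).  The truncation to `W ⪰ 1/2` costs `O(1/m)` because `δ ≤ n⁻³` beats the
crude bounds on the discarded event.

**Conclusion.**  `ζ` consists of the pairs with flat leverages and `W ⪰ 1/2`.  Averaging the
fixed-sign estimates over the signs gives the claim; for the bias the conditional mean is tested
against itself (`condExp_bias`, `condExp_variance`).  The resulting errors have orders
`(p/m)^{3/2}` and `√(p L)/m`, and the factor `log n / log log n` is at least one.
-/


open Matrix Finset

noncomputable section

/-- Probability of the i.i.d. sample `ω` of `m` draws from the sampling
distribution `π` (pmf of the product measure on `Ω = Fin m → Fin n`). -/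
def samplingP {n : ℕ} (π : Fin n → ℝ) {m : ℕ} (ω : Fin m → Fin n) : ℝ :=
  ∏ s, π (ω s)

/-- The sampling matrix `S(ω) ∈ ℝ^{m×n}` with `S(ω)_{s,j} = 1/√(m π_{ω s})` if
`j = ω s` and `0` otherwise. -/
def samplingS {n : ℕ} (π : Fin n → ℝ) {m : ℕ} (ω : Fin m → Fin n) :
    Matrix (Fin m) (Fin n) ℝ :=
  Matrix.of fun s j => if j = ω s then 1 / Real.sqrt (m * π (ω s)) else 0

/-- The `i`-th leverage score `ℓ_i(X) = x_iᵀ (Xᵀ X)⁻¹ x_i`. -/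
def lev {n p : ℕ} (X : Matrix (Fin n) (Fin p) ℝ) (i : Fin n) : ℝ :=
  X i ⬝ᵥ ((Xᵀ * X)⁻¹ *ᵥ X i)

/-- Maximum importance sampling approximation factor
`θ_max(X) = max_i ℓ_i(X)/(p π_i)`. -/
def thetaMax {n p : ℕ} (X : Matrix (Fin n) (Fin p) ℝ) (π : Fin n → ℝ) : ℝ :=
  ⨆ i, lev X i / (p * π i)

/-- Probability of an event `ζ` relative to the pmf `P`. -/
def eventProb {Ω : Type*} (P : Ω → ℝ) (ζ : Finset Ω) : ℝ :=
  ∑ ω ∈ ζ, P ω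

/-- Conditional expectation `E_ζ[f] = P(ζ)⁻¹ ∑_{ω ∈ ζ} P(ω) f(ω)`. -/
def condExp {Ω V : Type*} [AddCommMonoid V] [Module ℝ V]
    (P : Ω → ℝ) (ζ : Finset Ω) (f : Ω → V) : V :=
  (eventProb P ζ)⁻¹ • ∑ ω ∈ ζ, P ω • f ω

/-- Frobenius norm `‖A‖_F = √(trace (Aᵀ A))`. -/
def frobNorm {k l : ℕ} (A : Matrix (Fin k) (Fin l) ℝ) : ℝ :=
  Real.sqrt ((Aᵀ * A).trace)

/-- Loewner order: `A ⪯ B` iff `B − A` is positive semidefinite. -/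
def loewnerLE {k : ℕ} (A B : Matrix (Fin k) (Fin k) ℝ) : Prop :=
  (B - A).PosSemidef

/-- Least-squares loss `L(β) = ‖y − X β‖²`. -/
def lossL {n p : ℕ} (X : Matrix (Fin n) (Fin p) ℝ) (y : Fin n → ℝ)
    (β : Fin p → ℝ) : ℝ :=
  (y - X *ᵥ β) ⬝ᵥ (y - X *ᵥ β)

/-- OLS solution `β_OLS = (Xᵀ X)⁻¹ Xᵀ y`. -/
def olsSol {n p : ℕ} (X : Matrix (Fin n) (Fin p) ℝ) (y : Fin n → ℝ) : Fin p → ℝ :=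
  (Xᵀ * X)⁻¹ *ᵥ (Xᵀ *ᵥ y)

/-- OLS residual `r = y − X β_OLS`. -/
def olsResid {n p : ℕ} (X : Matrix (Fin n) (Fin p) ℝ) (y : Fin n → ℝ) : Fin n → ℝ :=
  y - X *ᵥ olsSol X y

/-- Subsampled OLS estimator `β̃(ω) = ((S(ω) X)ᵀ S(ω) X)⁻¹ (S(ω) X)ᵀ S(ω) y`. -/
def betaTilde {n p : ℕ} (X : Matrix (Fin n) (Fin p) ℝ) (y : Fin n → ℝ)
    (π : Fin n → ℝ) {m : ℕ} (ω : Fin m → Fin n) : Fin p → ℝ :=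
  ((samplingS π ω * X)ᵀ * (samplingS π ω * X))⁻¹ *ᵥ
    ((samplingS π ω * X)ᵀ *ᵥ (samplingS π ω *ᵥ y))

/-- `Δ(X) = rᵀ diag(ℓ_i(X)/(m π_i)) r`. -/
def deltaOLS {n p : ℕ} (X : Matrix (Fin n) (Fin p) ℝ) (y : Fin n → ℝ)
    (π : Fin n → ℝ) (m : ℕ) : ℝ :=
  olsResid X y ⬝ᵥ
    (Matrix.diagonal (fun i => lev X i / (m * π i)) *ᵥ olsResid X y)

/-- Sign associated to a Boolean: `true ↦ 1`, `false ↦ −1`. -/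
def sgn (b : Bool) : ℝ := if b then 1 else -1

/-- Diagonal sign matrix `D(ξ)` of a sign vector `ξ`. -/
def Dsgn {n : ℕ} (ξ : Fin n → Bool) : Matrix (Fin n) (Fin n) ℝ :=
  Matrix.diagonal fun i => sgn (ξ i)

/-- pmf of the joint sample space `Ω × Ξ` for SRHT: `m` i.i.d. uniform draws
from `Fin n` together with `n` i.i.d. uniform signs. -/
def srhtP (n m : ℕ) (z : (Fin m → Fin n) × (Fin n → Bool)) : ℝ :=
  samplingP (fun _ => (n : ℝ)⁻¹) z.1 * (1 / 2 : ℝ) ^ n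

/-- `X_HD(ξ) = H D(ξ) X / √n`. -/
def XHD {n p : ℕ} (H : Matrix (Fin n) (Fin n) ℝ) (X : Matrix (Fin n) (Fin p) ℝ)
    (ξ : Fin n → Bool) : Matrix (Fin n) (Fin p) ℝ :=
  (Real.sqrt n)⁻¹ • (H * Dsgn ξ * X)

/-- `y_HD(ξ) = H D(ξ) y / √n`. -/
def yHD {n : ℕ} (H : Matrix (Fin n) (Fin n) ℝ) (y : Fin n → ℝ)
    (ξ : Fin n → Bool) : Fin n → ℝ :=
  (Real.sqrt n)⁻¹ • (H *ᵥ (Dsgn ξ *ᵥ y))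

/-- SRHT subsampled OLS estimator
`β̃_SRHT(ω,ξ) = ((S(ω) X_HD(ξ))ᵀ S(ω) X_HD(ξ))⁻¹ (S(ω) X_HD(ξ))ᵀ S(ω) y_HD(ξ)`,
where `S` is the uniform sampling matrix (`π_i = 1/n`). -/
def betaSRHT {n p m : ℕ} (H : Matrix (Fin n) (Fin n) ℝ)
    (X : Matrix (Fin n) (Fin p) ℝ) (y : Fin n → ℝ)
    (z : (Fin m → Fin n) × (Fin n → Bool)) : Fin p → ℝ :=
  ((samplingS (fun _ => (n : ℝ)⁻¹) z.1 * XHD H X z.2)ᵀ *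
      (samplingS (fun _ => (n : ℝ)⁻¹) z.1 * XHD H X z.2))⁻¹ *ᵥ
    ((samplingS (fun _ => (n : ℝ)⁻¹) z.1 * XHD H X z.2)ᵀ *ᵥ
      (samplingS (fun _ => (n : ℝ)⁻¹) z.1 *ᵥ yHD H y z.2))

/-! ### Spectral calculus and trace inequalities for the exponential -/

/-- The matrix `U diag(l) Uᵀ`. For orthogonal `U` this is the symmetric matrix with eigenbasis the
columns of `U` and eigenvalues `l`, and applying a function to it amounts to applying it to `l`. -/
def spec {d : ℕ} (U : Matrix (Fin d) (Fin d) ℝ) (l : Fin d → ℝ) : Matrix (Fin d) (Fin d) ℝ :=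
  U * diagonal l * Uᵀ

lemma exists_spec {d : ℕ} (A : Matrix (Fin d) (Fin d) ℝ) (hA : Aᵀ = A) :
    ∃ (U : Matrix (Fin d) (Fin d) ℝ) (l : Fin d → ℝ), Uᵀ * U = 1 ∧ U * Uᵀ = 1 ∧ A = spec U l := by
  have h : A.IsHermitian := by
    rw [Matrix.IsHermitian, conjTranspose_eq_transpose_of_trivial, hA]
  have hs := h.spectral_theorem
  refine ⟨(h.eigenvectorUnitary : Matrix (Fin d) (Fin d) ℝ), h.eigenvalues, ?_, ?_, ?_⟩
  · have := (Unitary.mem_iff.1 h.eigenvectorUnitary.2).1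
    rwa [star_eq_conjTranspose, conjTranspose_eq_transpose_of_trivial] at this
  · have := (Unitary.mem_iff.1 h.eigenvectorUnitary.2).2
    rwa [star_eq_conjTranspose, conjTranspose_eq_transpose_of_trivial] at this
  · rw [spec]
    conv_lhs => rw [hs]
    simp [Unitary.conjStarAlgAut_apply, star_eq_conjTranspose,
      conjTranspose_eq_transpose_of_trivial]

lemma spec_mul {d : ℕ} {U : Matrix (Fin d) (Fin d) ℝ} (hU : Uᵀ * U = 1) (l k : Fin d → ℝ) :
    spec U l * spec U k = spec U (fun a => l a * k a) := by
  simp only [spec]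
  calc U * diagonal l * Uᵀ * (U * diagonal k * Uᵀ)
      = U * diagonal l * (Uᵀ * U) * diagonal k * Uᵀ := by simp only [Matrix.mul_assoc]
    _ = _ := by rw [hU, Matrix.mul_one, Matrix.mul_assoc U, diagonal_mul_diagonal]

lemma trace_spec_mul_spec {d : ℕ} (U V : Matrix (Fin d) (Fin d) ℝ) (l k : Fin d → ℝ) :
    (spec U l * spec V k).trace = ∑ a, ∑ b, l a * k b * (Uᵀ * V) a b ^ 2 := by
  have : (spec U l * spec V k).trace
      = (diagonal l * (Uᵀ * V) * diagonal k * (Uᵀ * V)ᵀ).trace := by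
    rw [transpose_mul, transpose_transpose]
    simp only [spec]
    rw [Matrix.mul_assoc U, Matrix.mul_assoc U, Matrix.trace_mul_comm U]
    simp only [Matrix.mul_assoc]
  rw [this, trace]
  refine sum_congr rfl fun a _ => ?_
  simp only [Matrix.diag, Matrix.mul_apply (M := diagonal l * (Uᵀ * V) * diagonal k), mul_diagonal,
    diagonal_mul, transpose_apply]
  exact sum_congr rfl fun b _ => by ring

lemma spec_one {d : ℕ} {U : Matrix (Fin d) (Fin d) ℝ} (hU : U * Uᵀ = 1) :
    spec U (fun _ => 1) = 1 := by
  have : (diagonal fun _ : Fin d => (1 : ℝ)) = 1 := diagonal_one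
  simp [spec, this, hU]

lemma trace_spec {d : ℕ} {U : Matrix (Fin d) (Fin d) ℝ} (hU : Uᵀ * U = 1) (l : Fin d → ℝ) :
    (spec U l).trace = ∑ a, l a := by
  rw [spec, Matrix.trace_mul_comm, ← Matrix.mul_assoc, hU, Matrix.one_mul, trace_diagonal]

/-- Klein's inequality `Tr e^B + Tr e^B (A - B) ≤ Tr e^A`, for `A = U diag(l) Uᵀ` and
`B = V diag(k) Vᵀ`: convexity of `exp` for each pair of eigenvalues, weighted by `(Uᵀ V)_{ab}²`. -/
lemma klein_exp {d : ℕ} {U V : Matrix (Fin d) (Fin d) ℝ} (l k : Fin d → ℝ)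
    (hU' : U * Uᵀ = 1) (hV : Vᵀ * V = 1) (hV' : V * Vᵀ = 1) :
    (spec V fun b => Real.exp (k b)).trace
        + (spec V (fun b => Real.exp (k b)) * (spec U l - spec V k)).trace
      ≤ (spec U fun a => Real.exp (l a)).trace := by
  have e1 : (spec V fun b => Real.exp (k b)).trace
      = (spec U (fun _ => 1) * spec V fun b => Real.exp (k b)).trace := by
    rw [spec_one hU', Matrix.one_mul]
  have e2 : (spec U fun b => Real.exp (l b)).trace
      = (spec U (fun b => Real.exp (l b)) * spec V fun _ => 1).trace := by
    rw [spec_one hV', Matrix.mul_one]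
  have e3 : (spec V (fun b => Real.exp (k b)) * (spec U l - spec V k)).trace
      = (spec U l * spec V (fun b => Real.exp (k b))).trace
        - (spec U (fun _ => 1) * spec V (fun b => Real.exp (k b) * k b)).trace := by
    rw [Matrix.mul_sub, trace_sub, trace_mul_comm, spec_mul hV, spec_one hU', Matrix.one_mul]
  rw [e1, e2, e3]
  simp only [trace_spec_mul_spec, ← sum_add_distrib, ← sum_sub_distrib]
  refine sum_le_sum fun a _ => sum_le_sum fun b _ => ?_
  have h : Real.exp (k b) * (l a - k b + 1) ≤ Real.exp (l a) := by
    calc _ ≤ Real.exp (k b) * Real.exp (l a - k b) := by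
          gcongr; exact Real.add_one_le_exp _
      _ = _ := by rw [← Real.exp_add]; congr 1; ring
  nlinarith [sq_nonneg ((Uᵀ * V) a b)]

/-- With `h = (x - y) / 2` this is `h tanh h ≤ h²`. -/
lemma exp_sub_mul_le (x y : ℝ) :
    (Real.exp x - Real.exp y) * (x - y) ≤ (Real.exp x + Real.exp y) * (x - y) ^ 2 / 2 := by
  -- The inequality `tanh h ≤ h` in product form: `h cosh h - sinh h` has derivative `h sinh h`.
  have key : ∀ h : ℝ, 0 ≤ h → Real.sinh h ≤ h * Real.cosh h := by
    intro h hh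
    have hmono : MonotoneOn (fun h : ℝ => h * Real.cosh h - Real.sinh h) (Set.Ici 0) := by
      apply monotoneOn_of_deriv_nonneg (convex_Ici 0)
      · fun_prop
      · intro z hz; apply DifferentiableAt.differentiableWithinAt; fun_prop
      · intro z hz
        rw [interior_Ici] at hz
        have : HasDerivAt (fun h : ℝ => h * Real.cosh h - Real.sinh h)
            (1 * Real.cosh z + z * Real.sinh z - Real.cosh z) z :=
          ((hasDerivAt_id z).mul (Real.hasDerivAt_cosh z)).sub (Real.hasDerivAt_sinh z)
        rw [this.deriv]
        have := Real.sinh_nonneg_iff.2 (le_of_lt hz)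
        have hz' : 0 ≤ z := le_of_lt hz
        nlinarith [mul_nonneg hz' this]
    have := hmono (Set.mem_Ici.2 le_rfl) (Set.mem_Ici.2 hh) hh
    simp at this; linarith
  have main : ∀ x y : ℝ, y ≤ x →
      (Real.exp x - Real.exp y) * (x - y) ≤ (Real.exp x + Real.exp y) * (x - y) ^ 2 / 2 := by
    intro x y hxy
    have k := key ((x - y) / 2) (by linarith)
    rw [Real.sinh_eq, Real.cosh_eq] at k
    have ex : Real.exp x = Real.exp ((x + y) / 2) * Real.exp ((x - y) / 2) := by
      rw [← Real.exp_add]; congr 1; ring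
    have ey : Real.exp y = Real.exp ((x + y) / 2) * Real.exp (-((x - y) / 2)) := by
      rw [← Real.exp_add]; congr 1; ring
    have hp : 0 ≤ Real.exp ((x + y) / 2) * (x - y) :=
      mul_nonneg (Real.exp_pos _).le (by linarith)
    have := mul_le_mul_of_nonneg_left k hp
    rw [ex, ey]; nlinarith
  rcases le_total y x with h | h
  · exact main x y h
  · have := main y x h; nlinarith

/-- `Tr (e^A - e^B)(A - B) ≤ ½ Tr (e^A + e^B)(A - B)²` for `A = U diag(l) Uᵀ` and
`B = V diag(k) Vᵀ`. In the two eigenbases every trace is a sum over pairs of eigenvalues with weights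
`(Uᵀ V)_{ab}²`, which reduces the claim to `exp_sub_mul_le`. -/
lemma exp_trace_diff {d : ℕ} {U V : Matrix (Fin d) (Fin d) ℝ} (l k : Fin d → ℝ)
    (hU : Uᵀ * U = 1) (hU' : U * Uᵀ = 1) (hV : Vᵀ * V = 1) (hV' : V * Vᵀ = 1) :
    ((spec U (fun b => Real.exp (l b)) - spec V (fun b => Real.exp (k b)))
        * (spec U l - spec V k)).trace
      ≤ ((spec U (fun b => Real.exp (l b)) + spec V (fun b => Real.exp (k b)))
        * ((spec U l - spec V k) * (spec U l - spec V k))).trace / 2 := by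
  set EA := spec U (fun b => Real.exp (l b)) with hEA
  set EB := spec V (fun b => Real.exp (k b)) with hEB
  have e1 : ((EA - EB) * (spec U l - spec V k)).trace
      = (spec U (fun a => Real.exp (l a) * l a) * spec V fun _ => 1).trace
        - (EA * spec V k).trace - (spec U l * EB).trace
        + (spec U (fun _ => 1) * spec V fun b => Real.exp (k b) * k b).trace := by
    rw [spec_one hU', spec_one hV', ← spec_mul hU, ← spec_mul hV, Matrix.mul_one, Matrix.one_mul,
      trace_mul_comm (spec U l) EB]
    simp only [Matrix.mul_sub, Matrix.sub_mul, trace_sub]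
    ring
  have c1 : (EA * (spec V k * spec U l)).trace
      = (spec U (fun a => Real.exp (l a) * l a) * spec V k).trace := by
    rw [← Matrix.mul_assoc, trace_mul_comm, ← Matrix.mul_assoc, hEA, spec_mul hU]
    simp only [mul_comm]
  have c2 : (EA * (spec U l * spec V k)).trace
      = (spec U (fun a => Real.exp (l a) * l a) * spec V k).trace := by
    rw [← Matrix.mul_assoc, hEA, spec_mul hU]
  have c3 : (EB * (spec V k * spec U l)).trace
      = (spec U l * spec V (fun a => Real.exp (k a) * k a)).trace := by
    rw [← Matrix.mul_assoc, trace_mul_comm, hEB, spec_mul hV]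
  have c4 : (EB * (spec U l * spec V k)).trace
      = (spec U l * spec V (fun a => Real.exp (k a) * k a)).trace := by
    rw [trace_mul_comm, Matrix.mul_assoc, hEB, spec_mul hV]
    simp only [mul_comm]
  have c5 : (EA * (spec U l * spec U l)).trace
      = (spec U (fun a => Real.exp (l a) * (l a * l a)) * spec V fun _ => 1).trace := by
    rw [spec_one hV', Matrix.mul_one, hEA, spec_mul hU, spec_mul hU]
  have c6 : (EA * (spec V k * spec V k)).trace
      = (EA * spec V fun a => k a * k a).trace := by
    rw [spec_mul hV]
  have c7 : (EB * (spec V k * spec V k)).trace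
      = (spec U (fun _ => 1) * spec V (fun a => Real.exp (k a) * (k a * k a))).trace := by
    rw [spec_one hU', Matrix.one_mul, hEB, spec_mul hV, spec_mul hV]
  have c8 : (EB * (spec U l * spec U l)).trace
      = (spec U (fun a => l a * l a) * EB).trace := by
    rw [spec_mul hU, trace_mul_comm]
  have e2 : ((EA + EB) * ((spec U l - spec V k) * (spec U l - spec V k))).trace
      = (EA * (spec U l * spec U l)).trace - (EA * (spec U l * spec V k)).trace
        - (EA * (spec V k * spec U l)).trace + (EA * (spec V k * spec V k)).trace
        + ((EB * (spec U l * spec U l)).trace - (EB * (spec U l * spec V k)).trace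
        - (EB * (spec V k * spec U l)).trace + (EB * (spec V k * spec V k)).trace) := by
    simp only [Matrix.mul_sub, Matrix.sub_mul, Matrix.add_mul, trace_sub, trace_add]
    ring
  rw [e1, e2, c1, c2, c3, c4, c5, c6, c7, c8, hEA, hEB]
  simp only [trace_spec_mul_spec, ← sum_add_distrib, ← sum_sub_distrib, Finset.sum_div]
  refine sum_le_sum fun a _ => sum_le_sum fun b _ => ?_
  have h := exp_sub_mul_le (l a) (k b)
  have := mul_le_mul_of_nonneg_right h (sq_nonneg ((Uᵀ * V) a b))
  nlinarith

/-! ### Expectation over i.i.d. uniform draws and the matrix exponential -/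

/-- Expectation over `m` independent uniform draws from `Fin n`. -/
def EW (n m : ℕ) (f : (Fin m → Fin n) → ℝ) : ℝ := ((n : ℝ)⁻¹) ^ m * ∑ ω, f ω

lemma EW_add {n m : ℕ} (f g : (Fin m → Fin n) → ℝ) :
    EW n m (fun ω => f ω + g ω) = EW n m f + EW n m g := by
  simp [EW, sum_add_distrib, mul_add]

lemma EW_sub {n m : ℕ} (f g : (Fin m → Fin n) → ℝ) :
    EW n m (fun ω => f ω - g ω) = EW n m f - EW n m g := by
  simp [EW, sum_sub_distrib, mul_sub]

lemma EW_mul {n m : ℕ} (c : ℝ) (f : (Fin m → Fin n) → ℝ) :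
    EW n m (fun ω => c * f ω) = c * EW n m f := by
  simp [EW, ← mul_sum]; ring

lemma EW_const {n m : ℕ} (hn : 0 < n) (c : ℝ) : EW n m (fun _ => c) = c := by
  have : (n : ℝ) ≠ 0 := by positivity
  simp [EW]
  field_simp

lemma EW_mono {n m : ℕ} {f g : (Fin m → Fin n) → ℝ} (h : ∀ ω, f ω ≤ g ω) :
    EW n m f ≤ EW n m g := by
  unfold EW
  gcongr with ω
  exact h ω

lemma EW_nonneg {n m : ℕ} {f : (Fin m → Fin n) → ℝ} (h : ∀ ω, 0 ≤ f ω) : 0 ≤ EW n m f := by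
  unfold EW
  have := sum_nonneg fun ω (_ : ω ∈ univ) => h ω
  positivity

lemma EW_sum {n m : ℕ} {ι : Type*} (s : Finset ι) (f : ι → (Fin m → Fin n) → ℝ) :
    EW n m (fun ω => ∑ i ∈ s, f i ω) = ∑ i ∈ s, EW n m (f i) := by
  simp only [EW, ← mul_sum]
  rw [sum_comm]

lemma EW_zero {n : ℕ} (f : (Fin 0 → Fin n) → ℝ) : EW n 0 f = f Fin.elim0 := by
  simp only [EW, pow_zero, one_mul]
  rw [Fintype.sum_unique]
  exact congrArg f (Subsingleton.elim _ _)

/-- Conditioning on the first draw. -/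
lemma EW_succ {n m : ℕ} (f : (Fin (m + 1) → Fin n) → ℝ) :
    EW n (m + 1) f = (n : ℝ)⁻¹ * ∑ i, EW n m fun ω => f (Fin.cons i ω) := by
  simp only [EW, ← mul_sum]
  rw [pow_succ', mul_assoc]
  congr 2
  rw [← (Fin.consEquiv fun _ : Fin (m + 1) => Fin n).sum_comp, Fintype.sum_prod_type]
  rfl

/-- The Cauchy–Schwarz inequality for `EW`. -/
lemma EW_mul_le_sqrt {n m : ℕ} (f g : (Fin m → Fin n) → ℝ) :
    EW n m (fun ω => f ω * g ω)
      ≤ √(EW n m fun ω => f ω ^ 2) * √(EW n m fun ω => g ω ^ 2) := by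
  have h := Real.sum_mul_le_sqrt_mul_sqrt (univ : Finset (Fin m → Fin n)) f g
  have hc : (0 : ℝ) ≤ ((n : ℝ)⁻¹) ^ m := by positivity
  simp only [EW]
  rw [Real.sqrt_mul hc, Real.sqrt_mul hc]
  calc _ ≤ ((n : ℝ)⁻¹) ^ m * (√(∑ ω, f ω ^ 2) * √(∑ ω, g ω ^ 2)) := by gcongr
    _ = _ := by
      nth_rewrite 1 [← Real.mul_self_sqrt hc]; ring

/-- The exponential of a symmetric matrix, through a chosen spectral decomposition; the junk value
`0` is taken on matrices that are not symmetric. Only the trace and quadratic form are needed, for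
which `expS_spec` suffices. -/
def expS {d : ℕ} (A : Matrix (Fin d) (Fin d) ℝ) : Matrix (Fin d) (Fin d) ℝ :=
  if h : Aᵀ = A then
    spec (exists_spec A h).choose (fun a => Real.exp ((exists_spec A h).choose_spec.choose a))
  else 0

lemma expS_spec {d : ℕ} {A : Matrix (Fin d) (Fin d) ℝ} (hA : Aᵀ = A) :
    ∃ (U : Matrix (Fin d) (Fin d) ℝ) (l : Fin d → ℝ), Uᵀ * U = 1 ∧ U * Uᵀ = 1 ∧ A = spec U l ∧
      expS A = spec U fun a => Real.exp (l a) := by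
  refine ⟨_, _, (exists_spec A hA).choose_spec.choose_spec.1,
    (exists_spec A hA).choose_spec.choose_spec.2.1,
    (exists_spec A hA).choose_spec.choose_spec.2.2, ?_⟩
  rw [expS, dif_pos hA]

lemma quad_spec {d : ℕ} (U : Matrix (Fin d) (Fin d) ℝ) (l x : Fin d → ℝ) :
    x ⬝ᵥ (spec U l *ᵥ x) = ∑ a, l a * (Uᵀ *ᵥ x) a ^ 2 := by
  rw [spec, ← mulVec_mulVec, ← mulVec_mulVec, dotProduct_mulVec, ← mulVec_transpose,
    dotProduct]
  refine sum_congr rfl fun a _ => ?_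
  rw [mulVec_diagonal]; ring

lemma quad_expS_nonneg {d : ℕ} {A : Matrix (Fin d) (Fin d) ℝ} (hA : Aᵀ = A) (x : Fin d → ℝ) :
    0 ≤ x ⬝ᵥ (expS A *ᵥ x) := by
  obtain ⟨U, l, -, -, -, h⟩ := expS_spec hA
  rw [h, quad_spec]
  positivity

lemma trace_mul_vecMulVec {d : ℕ} (A : Matrix (Fin d) (Fin d) ℝ) (x : Fin d → ℝ) :
    (A * vecMulVec x x).trace = x ⬝ᵥ (A *ᵥ x) := by
  rw [mul_vecMulVec, trace_vecMulVec, dotProduct_comm]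

/-- One step of the trace-exponential argument: subtracting `θ c x xᵀ` from the exponent `A` lowers
the trace by at least three quarters of its first-order variation. Klein's inequality bounds the
decrease below through `e^B`, with `B` the new exponent, and `exp_trace_diff` passes from `e^B` back
to `e^A`, losing a factor `(1 - 1/7) / (1 + 1/7) = 3/4`. -/
lemma trace_expS_step {d : ℕ} {A : Matrix (Fin d) (Fin d) ℝ} (hA : Aᵀ = A) (x : Fin d → ℝ)
    {c K θ : ℝ} (hc : 0 ≤ c) (hx : c * (x ⬝ᵥ x) ≤ K) (hθ : 0 < θ) (hθK : θ * K ≤ 2 / 7) :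
    (expS (A - θ • (c • vecMulVec x x))).trace
      ≤ (expS A).trace - 3 / 4 * θ * (expS A * (c • vecMulVec x x)).trace := by
  set B := A - θ • (c • vecMulVec x x) with hB
  have hBs : Bᵀ = B := by
    rw [hB]; simp [transpose_sub, transpose_smul, hA, transpose_vecMulVec]
  obtain ⟨U, l, hU, hU', hAe, hAE⟩ := expS_spec hA
  obtain ⟨V, k, hV, hV', hBe, hBE⟩ := expS_spec hBs
  have k1 := klein_exp l k hU' hV hV'
  have k2 := exp_trace_diff l k hU hU' hV hV'
  rw [← hBE, ← hAE, ← hAe, ← hBe] at k1 k2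
  have hAB : A - B = (θ * c) • vecMulVec x x := by rw [hB, smul_smul]; abel
  have hsq : vecMulVec x x * vecMulVec x x = (x ⬝ᵥ x) • vecMulVec x x := by
    rw [vecMulVec_mul_vecMulVec, vecMulVec_smul']
    simp
  rw [hAB] at k1 k2
  simp only [smul_mul, Matrix.mul_smul, trace_smul, hsq, Matrix.add_mul, Matrix.sub_mul, trace_add,
    trace_sub, trace_mul_vecMulVec, smul_eq_mul, smul_add] at k1 k2 ⊢
  have p1 := quad_expS_nonneg hA x
  have p2 := quad_expS_nonneg hBs x
  set f := x ⬝ᵥ (expS A *ᵥ x)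
  set g := x ⬝ᵥ (expS B *ᵥ x)
  have k3 : (θ * c) * (f - g) ≤ (θ * c) * (1 / 7 * (f + g)) := by
    calc _ ≤ _ := k2
      _ = (θ * c) * ((θ * (c * (x ⬝ᵥ x))) / 2 * (f + g)) := by ring
      _ ≤ _ := by
        have h1 : θ * (c * (x ⬝ᵥ x)) ≤ 2 / 7 := le_trans (by gcongr) hθK
        have h2 : θ * (c * (x ⬝ᵥ x)) / 2 ≤ 1 / 7 := by linarith
        gcongr
  nlinarith

/-! ### Matrix Chernoff lower tail -/

lemma trace_expS_zero (d : ℕ) : (expS (0 : Matrix (Fin d) (Fin d) ℝ)).trace = d := by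
  obtain ⟨U, l, hU, -, h0, hE⟩ := expS_spec (A := (0 : Matrix (Fin d) (Fin d) ℝ)) transpose_zero
  have hl : diagonal l = 0 := by
    calc diagonal l = (Uᵀ * U) * diagonal l * (Uᵀ * U) := by rw [hU]; simp
      _ = Uᵀ * spec U l * U := by simp only [spec, Matrix.mul_assoc]
      _ = 0 := by rw [← h0]; simp
  have hl' : l = 0 := by
    funext a; simpa using congrFun (congrFun hl a) a
  rw [hE, trace_spec hU, hl']; simp

/-- The mean of the summand `n u uᵀ` is the identity, so by `trace_expS_step` each draw multiplies the
expected trace exponential by at most `1 - 3θ/4`. -/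
lemma EW_trace_expS_le {n d m : ℕ} (hn : 0 < n) (u : Fin n → Fin d → ℝ)
    (hu : ∑ i, vecMulVec (u i) (u i) = 1) {K θ : ℝ}
    (hK : ∀ i, n * (u i ⬝ᵥ u i) ≤ K) (hθ : 0 < θ) (hθK : θ * K ≤ 2 / 7) (hθ1 : θ ≤ 1)
    (A : Matrix (Fin d) (Fin d) ℝ) (hA : Aᵀ = A) :
    EW n m (fun ω => (expS (A - θ • ∑ s, (n : ℝ) • vecMulVec (u (ω s)) (u (ω s)))).trace)
      ≤ (1 - 3 / 4 * θ) ^ m * (expS A).trace := by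
  have hn' : (0 : ℝ) < n := by exact_mod_cast hn
  have h0 : 0 ≤ 1 - 3 / 4 * θ := by linarith
  induction m generalizing A with
  | zero => rw [EW_zero]; simp
  | succ m ih =>
    rw [EW_succ]
    have step : ∀ i, EW n m (fun ω => (expS (A - θ • ∑ s : Fin (m + 1), (n : ℝ) •
          vecMulVec (u (Fin.cons (α := fun _ => Fin n) i ω s))
            (u (Fin.cons (α := fun _ => Fin n) i ω s)))).trace)
        ≤ (1 - 3 / 4 * θ) ^ m * ((expS A).trace
            - 3 / 4 * θ * (expS A * ((n : ℝ) • vecMulVec (u i) (u i))).trace) := by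
      intro i
      have hB : (A - θ • ((n : ℝ) • vecMulVec (u i) (u i)))ᵀ
          = A - θ • ((n : ℝ) • vecMulVec (u i) (u i)) := by
        simp [transpose_sub, transpose_smul, hA, transpose_vecMulVec]
      refine le_trans (le_of_eq ?_) ((ih _ hB).trans ?_)
      · congr 1; funext ω
        rw [Fin.sum_univ_succ]
        simp only [Fin.cons_zero, Fin.cons_succ, smul_add, sub_sub]
      · exact mul_le_mul_of_nonneg_left
          (trace_expS_step hA (u i) hn'.le (hK i) hθ hθK) (by positivity)
    calc _ ≤ (n : ℝ)⁻¹ * ∑ i : Fin n, (1 - 3 / 4 * θ) ^ m * ((expS A).trace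
            - 3 / 4 * θ * (expS A * ((n : ℝ) • vecMulVec (u i) (u i))).trace) := by
          gcongr with i; exact step i
      _ = (1 - 3 / 4 * θ) ^ m * ((n : ℝ)⁻¹ * (n * (expS A).trace)
            - 3 / 4 * θ * ((n : ℝ)⁻¹ * (n * (expS A * ∑ i, vecMulVec (u i) (u i)).trace))) := by
          rw [← mul_sum, sum_sub_distrib, ← mul_sum, Matrix.mul_sum, trace_sum]
          simp only [Matrix.mul_smul, trace_smul, smul_eq_mul, ← mul_sum, sum_const, card_univ,
            Fintype.card_fin, nsmul_eq_mul]
          ring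
      _ = _ := by
          rw [hu, Matrix.mul_one]
          field_simp
          ring

/-- If `S` fails to dominate `c` times the identity, then `e^{-θ S}` has an eigenvalue larger than
`e^{-θ c}`, and its trace is at least that. -/
lemma le_trace_expS {d : ℕ} {S : Matrix (Fin d) (Fin d) ℝ} (hS : Sᵀ = S) {θ c : ℝ} (hθ : 0 < θ)
    (h : ∃ x : Fin d → ℝ, x ⬝ᵥ (S *ᵥ x) < c * (x ⬝ᵥ x)) :
    Real.exp (-(θ * c)) ≤ (expS (0 - θ • S)).trace := by
  obtain ⟨x, hx⟩ := h
  have hs : (0 - θ • S)ᵀ = 0 - θ • S := by simp [hS]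
  obtain ⟨U, l, hU, hU', hA, hE⟩ := expS_spec hs
  rw [hE, trace_spec hU]
  by_contra! hlt
  have hl : ∀ a, l a ≤ -(θ * c) := by
    intro a
    have := single_le_sum (f := fun a => Real.exp (l a)) (fun _ _ => (Real.exp_pos _).le)
      (mem_univ a)
    exact (Real.exp_lt_exp.1 (this.trans_lt hlt)).le
  have h1 : x ⬝ᵥ ((0 - θ • S) *ᵥ x) = -(θ * (x ⬝ᵥ (S *ᵥ x))) := by
    rw [zero_sub, neg_mulVec, smul_mulVec, dotProduct_neg, dotProduct_smul, smul_eq_mul]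
  have h2 : x ⬝ᵥ x = ∑ a, (Uᵀ *ᵥ x) a ^ 2 := by
    have := quad_spec U (fun _ => 1) x
    rw [spec_one hU', one_mulVec] at this
    simpa using this
  have h3 : x ⬝ᵥ ((0 - θ • S) *ᵥ x) ≤ -(θ * c) * (x ⬝ᵥ x) := by
    rw [hA, quad_spec, h2, mul_sum]
    gcongr with a
    exact hl a
  rw [h1] at h3
  nlinarith

/-- Matrix Chernoff bound: `bad` is dominated by the indicator of the event that
`∑_s n u_{ω s} u_{ω s}ᵀ` is not bounded below by `m / 2`. Markov's inequality for the trace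
exponential gives `d exp(θ m / 2 - 3 θ m / 4)`, with `θ = 1 / (49 d)` the largest value that
`θ · 14 d ≤ 2 / 7` permits. -/
lemma chernoff {n d m : ℕ} (hn : 0 < n) (hd : 0 < d) (u : Fin n → Fin d → ℝ)
    (hu : ∑ i, vecMulVec (u i) (u i) = 1)
    (hK : ∀ i, n * (u i ⬝ᵥ u i) ≤ 14 * d) (bad : (Fin m → Fin n) → ℝ)
    (hbad : ∀ ω, bad ω = 0 ∨ bad ω = 1 ∧ ∃ x : Fin d → ℝ,
      x ⬝ᵥ ((∑ s, (n : ℝ) • vecMulVec (u (ω s)) (u (ω s))) *ᵥ x) < (m / 2 : ℝ) * (x ⬝ᵥ x)) :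
    EW n m bad ≤ d * Real.exp (-(m / (196 * d))) := by
  have hd' : (1 : ℝ) ≤ d := by exact_mod_cast hd
  set θ : ℝ := 1 / (49 * d) with hθ
  have hθ0 : 0 < θ := by positivity
  have hθ1 : θ ≤ 1 := by
    rw [hθ, div_le_one (by positivity)]; linarith
  have hθK : θ * (14 * d) ≤ 2 / 7 := by
    rw [hθ]; apply le_of_eq; field_simp; norm_num
  have h1 := EW_trace_expS_le (m := m) hn u hu hK hθ0 hθK hθ1 0 transpose_zero
  rw [trace_expS_zero] at h1
  have h2 : EW n m bad ≤ Real.exp (θ * (m / 2)) * EW n m (fun ω =>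
      (expS (0 - θ • ∑ s, (n : ℝ) • vecMulVec (u (ω s)) (u (ω s)))).trace) := by
    rw [← EW_mul]
    refine EW_mono fun ω => ?_
    have hS : (∑ s, (n : ℝ) • vecMulVec (u (ω s)) (u (ω s)))ᵀ
        = ∑ s, (n : ℝ) • vecMulVec (u (ω s)) (u (ω s)) := by
      simp [transpose_sum, transpose_smul, transpose_vecMulVec]
    rcases hbad ω with h | ⟨h, hx⟩
    · rw [h]
      have hs : (0 - θ • ∑ s, (n : ℝ) • vecMulVec (u (ω s)) (u (ω s)))ᵀ
          = 0 - θ • ∑ s, (n : ℝ) • vecMulVec (u (ω s)) (u (ω s)) := by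
        rw [transpose_sub, transpose_zero, transpose_smul, hS]
      obtain ⟨U, l, hU, -, -, hE⟩ := expS_spec hs
      rw [hE, trace_spec hU]
      positivity
    · rw [h]
      have := le_trace_expS hS hθ0 hx
      calc (1 : ℝ) = Real.exp (θ * (m / 2)) * Real.exp (-(θ * (m / 2))) := by
            rw [← Real.exp_add]; simp
        _ ≤ _ := by gcongr
  have h3 : (1 - 3 / 4 * θ) ^ m ≤ Real.exp (-(3 / 4 * θ * m)) := by
    have : 1 - 3 / 4 * θ ≤ Real.exp (-(3 / 4 * θ)) := by
      have := Real.add_one_le_exp (-(3 / 4 * θ)); linarith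
    calc _ ≤ Real.exp (-(3 / 4 * θ)) ^ m := pow_le_pow_left₀ (by linarith) this m
      _ = _ := by rw [← Real.exp_nat_mul]; congr 1; ring
  calc _ ≤ _ := h2
    _ ≤ Real.exp (θ * (m / 2)) * (Real.exp (-(3 / 4 * θ * m)) * d) := by
        gcongr; exact h1.trans (by gcongr)
    _ = d * (Real.exp (θ * (m / 2)) * Real.exp (-(3 / 4 * θ * m))) := by ring
    _ = _ := by
        rw [← Real.exp_add]; congr 2; rw [hθ]; field_simp; ring

/-! ### Moments of sums of centred draws -/

lemma dot_self_nonneg {d : ℕ} (x : Fin d → ℝ) : 0 ≤ x ⬝ᵥ x := by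
  simp only [dotProduct]; exact sum_nonneg fun i _ => mul_self_nonneg _

lemma dot_le_amgm {d : ℕ} (x y : Fin d → ℝ) : 2 * (x ⬝ᵥ y) ≤ x ⬝ᵥ x + y ⬝ᵥ y := by
  have := dot_self_nonneg (x - y)
  simp only [dotProduct_sub, sub_dotProduct] at this
  rw [dotProduct_comm y x] at this
  linarith

lemma dot_sq_le {d : ℕ} (x y : Fin d → ℝ) : (x ⬝ᵥ y) ^ 2 ≤ (x ⬝ᵥ x) * (y ⬝ᵥ y) := by
  have := sum_mul_sq_le_sq_mul_sq (univ : Finset (Fin d)) x y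
  simpa only [dotProduct, pow_two] using this

lemma dot_add_three_le {d : ℕ} (x y z : Fin d → ℝ) :
    (x + y + z) ⬝ᵥ (x + y + z) ≤ 3 * (x ⬝ᵥ x + y ⬝ᵥ y + z ⬝ᵥ z) := by
  have h1 := dot_le_amgm x y
  have h2 := dot_le_amgm x z
  have h3 := dot_le_amgm y z
  simp only [dotProduct_add, add_dotProduct]
  rw [dotProduct_comm y x, dotProduct_comm z x, dotProduct_comm z y]
  linarith

lemma EW_sum_dot {n d m : ℕ} (b : Fin n → Fin d → ℝ) (hb : ∑ i, b i = 0) (x : Fin d → ℝ) :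
    EW n m (fun ω => x ⬝ᵥ ∑ s, b (ω s)) = 0 := by
  induction m with
  | zero => rw [EW_zero]; simp
  | succ m ih =>
    rcases Nat.eq_zero_or_pos n with h0 | hn
    · subst h0; simp [EW_succ]
    rw [EW_succ]
    simp only [Fin.sum_univ_succ, Fin.cons_zero, Fin.cons_succ, dotProduct_add, EW_add, ih,
      EW_const hn, add_zero]
    rw [← dotProduct_sum, hb]; simp

/-- The second moment of a sum of `m` independent centred vectors is `m` times that of one. -/
lemma EW_sum_sq {n d m : ℕ} (hn : 0 < n) (b : Fin n → Fin d → ℝ) (hb : ∑ i, b i = 0) :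
    EW n m (fun ω => (∑ s, b (ω s)) ⬝ᵥ (∑ s, b (ω s)))
      = m * ((n : ℝ)⁻¹ * ∑ i, b i ⬝ᵥ b i) := by
  have hn' : (n : ℝ) ≠ 0 := by positivity
  induction m with
  | zero => rw [EW_zero]; simp
  | succ m ih =>
    rw [EW_succ]
    have : ∀ i, EW n m (fun ω => (∑ s : Fin (m + 1), b (Fin.cons (α := fun _ => Fin n) i ω s)) ⬝ᵥ
        (∑ s : Fin (m + 1), b (Fin.cons (α := fun _ => Fin n) i ω s)))
        = b i ⬝ᵥ b i + m * ((n : ℝ)⁻¹ * ∑ i, b i ⬝ᵥ b i) := by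
      intro i
      rw [← ih]
      have h0 := EW_sum_dot (m := m) b hb (b i)
      calc _ = EW n m (fun ω => (b i ⬝ᵥ b i + 2 * (b i ⬝ᵥ ∑ s, b (ω s)))
              + (∑ s, b (ω s)) ⬝ᵥ (∑ s, b (ω s))) := by
            congr 1; funext ω
            simp only [Fin.sum_univ_succ, Fin.cons_zero, Fin.cons_succ, dotProduct_add,
              add_dotProduct]
            rw [dotProduct_comm (∑ s, b (ω s)) (b i)]; ring
        _ = _ := by
            rw [EW_add, EW_add, EW_mul, h0, EW_const hn]; ring
    simp only [this, sum_add_distrib, sum_const, card_univ, Fintype.card_fin, nsmul_eq_mul]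
    push_cast
    field_simp
    ring

/-- In the product of a centred random matrix sum and a centred random vector sum built from the same
draws only the `m` diagonal terms have nonzero mean. -/
lemma EW_sum_mulVec_dot {n d m : ℕ} (hn : 0 < n) (A : Fin n → Matrix (Fin d) (Fin d) ℝ)
    (hA : ∑ i, A i = 0) (b : Fin n → Fin d → ℝ) (hb : ∑ i, b i = 0) (x : Fin d → ℝ) :
    EW n m (fun ω => x ⬝ᵥ ((∑ s, A (ω s)) *ᵥ ∑ s, b (ω s)))
      = m * (x ⬝ᵥ ((n : ℝ)⁻¹ • ∑ i, A i *ᵥ b i)) := by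
  have hn' : (n : ℝ) ≠ 0 := by positivity
  induction m with
  | zero => rw [EW_zero]; simp
  | succ m ih =>
    rw [EW_succ]
    have : ∀ i, EW n m (fun ω => x ⬝ᵥ ((∑ s : Fin (m + 1), A (Fin.cons (α := fun _ => Fin n) i ω s))
        *ᵥ (∑ s : Fin (m + 1), b (Fin.cons (α := fun _ => Fin n) i ω s))))
        = x ⬝ᵥ (A i *ᵥ b i) + m * (x ⬝ᵥ ((n : ℝ)⁻¹ • ∑ i, A i *ᵥ b i)) := by
      intro i
      rw [← ih]
      have h0 := EW_sum_dot (m := m) b hb (x ᵥ* A i)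
      have h1 : EW n m (fun ω => x ⬝ᵥ ∑ s, A (ω s) *ᵥ b i) = 0 :=
        EW_sum_dot (m := m) (fun j => A j *ᵥ b i) (by rw [← sum_mulVec, hA, zero_mulVec]) x
      calc _ = EW n m (fun ω => ((x ⬝ᵥ (A i *ᵥ b i) + (x ᵥ* A i) ⬝ᵥ ∑ s, b (ω s))
              + x ⬝ᵥ ∑ s, A (ω s) *ᵥ b i) + x ⬝ᵥ ((∑ s, A (ω s)) *ᵥ ∑ s, b (ω s))) := by
            congr 1; funext ω
            simp only [Fin.sum_univ_succ, Fin.cons_zero, Fin.cons_succ, add_mulVec, mulVec_add,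
              dotProduct_add]
            rw [dotProduct_mulVec x (A i) (∑ s, b (ω s)), sum_mulVec univ _ (b i)]
            ring
        _ = _ := by
            rw [EW_add, EW_add, EW_add, h0, h1, EW_const hn]; ring
    simp only [this, sum_add_distrib, sum_const, card_univ, Fintype.card_fin, nsmul_eq_mul]
    rw [dotProduct_smul, dotProduct_sum]
    push_cast
    simp only [smul_eq_mul]
    field_simp
    ring

/-- Second moment of the product `F = (∑ A) (∑ b)` of a matrix sum and a vector sum built from the same
centred draws: the square of its mean, plus a variance of order `m²`. By induction on `m`: a new draw
`i` adds `(∑ A) b_i + A_i ∑ b + A_i b_i` to `F`; of the cross terms with `F` only the one with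
`A_i b_i` survives averaging over `i`, and the square of the increment is at most three times the sum
of the three squares. -/
lemma EW_sum_mulVec_sq {n d m : ℕ} (hn : 0 < n) (A : Fin n → Matrix (Fin d) (Fin d) ℝ)
    (hA : ∑ i, A i = 0) (b : Fin n → Fin d → ℝ) (hb : ∑ i, b i = 0) {ka kb kc : ℝ}
    (hka0 : 0 ≤ ka) (hka : ∀ x, (n : ℝ)⁻¹ * ∑ i, (A i *ᵥ x) ⬝ᵥ (A i *ᵥ x) ≤ ka * (x ⬝ᵥ x))
    (hkb : (n : ℝ)⁻¹ * ∑ i, b i ⬝ᵥ b i ≤ kb)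
    (hkc : (n : ℝ)⁻¹ * ∑ i, (A i *ᵥ b i) ⬝ᵥ (A i *ᵥ b i) ≤ kc) :
    EW n m (fun ω => ((∑ s, A (ω s)) *ᵥ ∑ s, b (ω s)) ⬝ᵥ ((∑ s, A (ω s)) *ᵥ ∑ s, b (ω s)))
      ≤ m ^ 2 * (((n : ℝ)⁻¹ • ∑ i, A i *ᵥ b i) ⬝ᵥ ((n : ℝ)⁻¹ • ∑ i, A i *ᵥ b i))
        + 3 * (m ^ 2 * (ka * kb) + m * kc) := by
  have hn' : (n : ℝ) ≠ 0 := by positivity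
  set μ := (n : ℝ)⁻¹ • ∑ i, A i *ᵥ b i with hμ
  have hμμ := dot_self_nonneg μ
  have hkb0 : 0 ≤ kb := le_trans
    (mul_nonneg (by positivity) (sum_nonneg fun i _ => dot_self_nonneg _)) hkb
  have hkc0 : 0 ≤ kc := le_trans
    (mul_nonneg (by positivity) (sum_nonneg fun i _ => dot_self_nonneg _)) hkc
  induction m with
  | zero => rw [EW_zero]; simp
  | succ m ih =>
    set F : (Fin m → Fin n) → Fin d → ℝ := fun ω => (∑ s, A (ω s)) *ᵥ ∑ s, b (ω s) with hF
    obtain ⟨G, hG⟩ : ∃ G : Fin n → (Fin m → Fin n) → ℝ, ∀ i ω, G i ω = F ω ⬝ᵥ F ω + (2 * (F ω ⬝ᵥ ((∑ s, A (ω s)) *ᵥ b i)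
            + F ω ⬝ᵥ (A i *ᵥ ∑ s, b (ω s)) + F ω ⬝ᵥ (A i *ᵥ b i)) +
          3 * ((∑ s, A (ω s) *ᵥ b i) ⬝ᵥ (∑ s, A (ω s) *ᵥ b i)
            + (A i *ᵥ ∑ s, b (ω s)) ⬝ᵥ (A i *ᵥ ∑ s, b (ω s)) + (A i *ᵥ b i) ⬝ᵥ (A i *ᵥ b i))) :=
      ⟨_, fun _ _ => rfl⟩
    have h1 : ∀ i, EW n m (fun ω =>
        ((∑ s : Fin (m + 1), A (Fin.cons (α := fun _ => Fin n) i ω s))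
          *ᵥ (∑ s : Fin (m + 1), b (Fin.cons (α := fun _ => Fin n) i ω s))) ⬝ᵥ
        ((∑ s : Fin (m + 1), A (Fin.cons (α := fun _ => Fin n) i ω s))
          *ᵥ (∑ s : Fin (m + 1), b (Fin.cons (α := fun _ => Fin n) i ω s))))
        ≤ EW n m (G i) := by
      intro i
      refine EW_mono fun ω => ?_
      rw [hG]
      have h3 := dot_add_three_le ((∑ s, A (ω s)) *ᵥ b i) (A i *ᵥ ∑ s, b (ω s)) (A i *ᵥ b i)
      have e : ((∑ s : Fin (m + 1), A (Fin.cons (α := fun _ => Fin n) i ω s))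
          *ᵥ (∑ s : Fin (m + 1), b (Fin.cons (α := fun _ => Fin n) i ω s)))
          = F ω + ((∑ s, A (ω s)) *ᵥ b i + A i *ᵥ ∑ s, b (ω s) + A i *ᵥ b i) := by
        simp only [hF, Fin.sum_univ_succ, Fin.cons_zero, Fin.cons_succ, add_mulVec, mulVec_add]
        abel
      rw [e]
      set z := ((∑ s, A (ω s)) *ᵥ b i + A i *ᵥ ∑ s, b (ω s) + A i *ᵥ b i) with hz
      have e2 : (F ω + z) ⬝ᵥ (F ω + z) = F ω ⬝ᵥ F ω + 2 * (F ω ⬝ᵥ z) + z ⬝ᵥ z := by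
        simp only [dotProduct_add, add_dotProduct]; rw [dotProduct_comm z]; ring
      have e3 : F ω ⬝ᵥ z = F ω ⬝ᵥ ((∑ s, A (ω s)) *ᵥ b i)
            + F ω ⬝ᵥ (A i *ᵥ ∑ s, b (ω s)) + F ω ⬝ᵥ (A i *ᵥ b i) := by
        rw [hz, dotProduct_add, dotProduct_add]
      rw [e2, e3, ← sum_mulVec]
      linarith
    -- the cross terms average to the mean `μ` over the new draw
    have c1 : ∀ ω, ∑ i, F ω ⬝ᵥ ((∑ s, A (ω s)) *ᵥ b i) = 0 := by
      intro ω
      rw [← dotProduct_sum, ← mulVec_sum, hb, mulVec_zero, dotProduct_zero]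
    have c2 : ∀ ω, ∑ i, F ω ⬝ᵥ (A i *ᵥ ∑ s, b (ω s)) = 0 := by
      intro ω
      rw [← dotProduct_sum, ← sum_mulVec, hA, zero_mulVec, dotProduct_zero]
    have c3 : ∀ ω, ∑ i, F ω ⬝ᵥ (A i *ᵥ b i) = n * (μ ⬝ᵥ F ω) := by
      intro ω
      rw [← dotProduct_sum, hμ, smul_dotProduct, dotProduct_comm, smul_eq_mul]
      field_simp
    have d1 : (n : ℝ)⁻¹ * ∑ i, EW n m (fun ω => (∑ s, A (ω s) *ᵥ b i) ⬝ᵥ (∑ s, A (ω s) *ᵥ b i))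
        ≤ m * (ka * kb) := by
      calc _ ≤ (n : ℝ)⁻¹ * ∑ i, m * (ka * (b i ⬝ᵥ b i)) := by
            refine mul_le_mul_of_nonneg_left (sum_le_sum fun i _ => ?_) (by positivity)
            rw [EW_sum_sq hn (fun j => A j *ᵥ b i) (by rw [← sum_mulVec, hA, zero_mulVec])]
            exact mul_le_mul_of_nonneg_left (hka _) (by positivity)
        _ = m * (ka * ((n : ℝ)⁻¹ * ∑ i, b i ⬝ᵥ b i)) := by
            simp only [← mul_sum]; ring
        _ ≤ _ := by gcongr
    have d2 : EW n m (fun ω => (n : ℝ)⁻¹ * ∑ i, (A i *ᵥ ∑ s, b (ω s)) ⬝ᵥ (A i *ᵥ ∑ s, b (ω s)))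
        ≤ m * (ka * kb) := by
      calc _ ≤ EW n m (fun ω => ka * ((∑ s, b (ω s)) ⬝ᵥ (∑ s, b (ω s)))) :=
            EW_mono fun ω => hka _
        _ = ka * (m * ((n : ℝ)⁻¹ * ∑ i, b i ⬝ᵥ b i)) := by rw [EW_mul, EW_sum_sq hn b hb]
        _ ≤ ka * (m * kb) := by gcongr
        _ = _ := by ring
    have d3 : EW n m (fun ω => μ ⬝ᵥ F ω) = m * (μ ⬝ᵥ μ) := EW_sum_mulVec_dot hn A hA b hb μ
    rw [EW_succ]
    calc _ ≤ (n : ℝ)⁻¹ * ∑ i, EW n m (G i) := by gcongr with i; exact h1 i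
      _ = EW n m (fun ω => F ω ⬝ᵥ F ω) + 2 * EW n m (fun ω => μ ⬝ᵥ F ω)
          + 3 * ((n : ℝ)⁻¹ * ∑ i, EW n m
              (fun ω => (∑ s, A (ω s) *ᵥ b i) ⬝ᵥ (∑ s, A (ω s) *ᵥ b i))
            + EW n m (fun ω => (n : ℝ)⁻¹ * ∑ i, (A i *ᵥ ∑ s, b (ω s)) ⬝ᵥ (A i *ᵥ ∑ s, b (ω s)))
            + (n : ℝ)⁻¹ * ∑ i, (A i *ᵥ b i) ⬝ᵥ (A i *ᵥ b i)) := by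
          have hc4 := EW_const (m := m) hn ((n : ℝ)⁻¹ * ∑ i, (A i *ᵥ b i) ⬝ᵥ (A i *ᵥ b i))
          rw [← hc4, ← EW_sum, ← EW_sum, ← EW_mul, ← EW_mul, ← EW_mul, ← EW_add, ← EW_add,
            ← EW_add, ← EW_mul, ← EW_add]
          congr 1; funext ω
          simp only [hG, sum_add_distrib, ← mul_sum, sum_const, card_univ, Fintype.card_fin,
            nsmul_eq_mul, c1, c2, c3]
          field_simp
          ring
      _ ≤ _ := by
          rw [d3]
          push_cast
          have : 0 ≤ ka * kb := by positivity
          nlinarith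

/-! ### Sketches of an isometry with nearly uniform leverage -/

/-- The centred summand `n u_i u_iᵀ - 1` of the sketched Gram matrix. -/
def fluc {n d : ℕ} (u : Fin n → Fin d → ℝ) (i : Fin n) : Matrix (Fin d) (Fin d) ℝ :=
  (n : ℝ) • vecMulVec (u i) (u i) - 1

/-- The sketched Gram matrix `W = m⁻¹ ∑_s n u_{ω s} u_{ω s}ᵀ`. -/
def sk {n d m : ℕ} (u : Fin n → Fin d → ℝ) (ω : Fin m → Fin n) : Matrix (Fin d) (Fin d) ℝ :=
  (m : ℝ)⁻¹ • ∑ s, (n : ℝ) • vecMulVec (u (ω s)) (u (ω s))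

/-- The fluctuation `E = W - 1` of the sketched Gram matrix, written as a mean of centred terms; the
identity `W = 1 + E` needs `m ≠ 0` and is `sk_eq`. -/
def skE {n d m : ℕ} (u : Fin n → Fin d → ℝ) (ω : Fin m → Fin n) : Matrix (Fin d) (Fin d) ℝ :=
  (m : ℝ)⁻¹ • ∑ s, fluc u (ω s)

/-- The sketched moment vector `v = m⁻¹ ∑_s n r_{ω s} u_{ω s}`. -/
def skv {n d m : ℕ} (u : Fin n → Fin d → ℝ) (r : Fin n → ℝ) (ω : Fin m → Fin n) : Fin d → ℝ :=
  (m : ℝ)⁻¹ • ∑ s, (n * r (ω s)) • u (ω s)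

/-- The event `W ⪰ 1/2`. -/
def Good {n d m : ℕ} (u : Fin n → Fin d → ℝ) (ω : Fin m → Fin n) : Prop :=
  ∀ x : Fin d → ℝ, 1 / 2 * (x ⬝ᵥ x) ≤ x ⬝ᵥ (sk u ω *ᵥ x)

lemma sk_eq {n d m : ℕ} (hm : 0 < m) (u : Fin n → Fin d → ℝ) (ω : Fin m → Fin n) :
    sk u ω = 1 + skE u ω := by
  have : (m : ℝ) ≠ 0 := by positivity
  simp only [sk, skE, fluc, sum_sub_distrib, smul_sub, sum_const, card_univ, Fintype.card_fin]
  rw [← Nat.cast_smul_eq_nsmul ℝ, smul_smul, inv_mul_cancel₀ this, one_smul]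
  abel

lemma skE_transpose {n d m : ℕ} (u : Fin n → Fin d → ℝ) (ω : Fin m → Fin n) :
    (skE u ω)ᵀ = skE u ω := by
  simp [skE, fluc, transpose_smul, transpose_sum, transpose_sub, transpose_vecMulVec]

lemma Good.isUnit {n d m : ℕ} {u : Fin n → Fin d → ℝ} {ω : Fin m → Fin n} (h : Good u ω) :
    IsUnit (sk u ω).det := by
  rw [isUnit_iff_ne_zero]
  intro h0
  obtain ⟨x, hx, hx0⟩ := Matrix.exists_mulVec_eq_zero_iff.2 h0
  have := h x
  rw [hx0, dotProduct_zero] at this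
  have h1 : x ⬝ᵥ x = 0 := le_antisymm (by linarith) (dot_self_nonneg x)
  exact hx (dotProduct_self_eq_zero.1 h1)

lemma Good.inv_le {n d m : ℕ} {u : Fin n → Fin d → ℝ} {ω : Fin m → Fin n} (h : Good u ω)
    (z : Fin d → ℝ) :
    ((sk u ω)⁻¹ *ᵥ z) ⬝ᵥ ((sk u ω)⁻¹ *ᵥ z) ≤ 4 * (z ⬝ᵥ z) := by
  set g := (sk u ω)⁻¹ *ᵥ z with hg
  have hz : sk u ω *ᵥ g = z := by
    rw [hg, mulVec_mulVec, mul_nonsing_inv _ h.isUnit, one_mulVec]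
  have h1 := h g
  rw [hz] at h1
  have h2 := dot_le_amgm g ((2 : ℝ) • z)
  simp only [dotProduct_smul, smul_dotProduct, smul_eq_mul] at h2
  linarith

/-- The setting of the fixed-sign analysis: the `u_i` are the rows of a matrix with orthonormal columns,
`r` is orthogonal to these columns, and every `n ‖u_i‖²` is within `σ` of its average `d`. -/
structure Flat {n d : ℕ} (u : Fin n → Fin d → ℝ) (r : Fin n → ℝ) (σ : ℝ) : Prop where
  hn : 0 < n
  hd : 0 < d
  hu : ∑ i, vecMulVec (u i) (u i) = 1
  hr : ∑ i, r i • u i = 0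
  hs : ∀ i, |n * (u i ⬝ᵥ u i) - d| ≤ σ
  hσ0 : 0 ≤ σ
  hσ : σ ≤ 13 * d

namespace Flat

variable {n d : ℕ} {u : Fin n → Fin d → ℝ} {r : Fin n → ℝ} {σ : ℝ}

lemma lev_le (h : Flat u r σ) (i : Fin n) : n * (u i ⬝ᵥ u i) ≤ 14 * d := by
  have := (abs_le.1 (h.hs i)).2
  linarith [h.hσ]

lemma sum_dot_sq (h : Flat u r σ) (x : Fin d → ℝ) : ∑ i, (u i ⬝ᵥ x) ^ 2 = x ⬝ᵥ x := by
  have : x ⬝ᵥ ((∑ i, vecMulVec (u i) (u i)) *ᵥ x) = x ⬝ᵥ x := by rw [h.hu, one_mulVec]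
  rw [← this, sum_mulVec, dotProduct_sum]
  refine sum_congr rfl fun i _ => ?_
  rw [vecMulVec_mulVec, op_smul_eq_smul, dotProduct_smul, dotProduct_comm x, smul_eq_mul]; ring

lemma fluc_mulVec (u : Fin n → Fin d → ℝ) (i : Fin n) (x : Fin d → ℝ) :
    fluc u i *ᵥ x = (n * (u i ⬝ᵥ x)) • u i - x := by
  rw [fluc, sub_mulVec, one_mulVec, smul_mulVec, vecMulVec_mulVec, op_smul_eq_smul, smul_smul]

lemma sum_fluc (h : Flat u r σ) : ∑ i, fluc u i = 0 := by
  simp only [fluc, sum_sub_distrib, ← smul_sum, h.hu]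
  simp [← Nat.cast_smul_eq_nsmul ℝ]

lemma sum_b (h : Flat u r σ) : ∑ i, ((n : ℝ) * r i) • u i = 0 := by
  simp only [mul_smul, ← smul_sum, h.hr, smul_zero]

lemma fluc_sq_le (h : Flat u r σ) (x : Fin d → ℝ) :
    (n : ℝ)⁻¹ * ∑ i, (fluc u i *ᵥ x) ⬝ᵥ (fluc u i *ᵥ x) ≤ 14 * d * (x ⬝ᵥ x) := by
  have hn : (0 : ℝ) < n := by exact_mod_cast h.hn
  have h1 : ∀ i, (fluc u i *ᵥ x) ⬝ᵥ (fluc u i *ᵥ x)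
      ≤ n * (14 * d) * (u i ⬝ᵥ x) ^ 2 - 2 * n * (u i ⬝ᵥ x) ^ 2 + x ⬝ᵥ x := by
    intro i
    rw [fluc_mulVec]
    simp only [dotProduct_sub, sub_dotProduct, dotProduct_smul, smul_dotProduct, smul_eq_mul]
    rw [dotProduct_comm x (u i)]
    have := mul_le_mul_of_nonneg_left (h.lev_le i)
      (mul_nonneg hn.le (sq_nonneg (u i ⬝ᵥ x)))
    nlinarith
  calc _ ≤ (n : ℝ)⁻¹ * ∑ i, (n * (14 * d) * (u i ⬝ᵥ x) ^ 2 - 2 * n * (u i ⬝ᵥ x) ^ 2 + x ⬝ᵥ x) := by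
        gcongr with i; exact h1 i
    _ = 14 * d * (x ⬝ᵥ x) - x ⬝ᵥ x := by
        rw [sum_add_distrib, sum_sub_distrib, ← mul_sum, ← mul_sum, h.sum_dot_sq]
        simp only [sum_const, card_univ, Fintype.card_fin, nsmul_eq_mul]
        field_simp; ring
    _ ≤ _ := by linarith [dot_self_nonneg x]

lemma b_sq_eq (h : Flat u r σ) :
    (n : ℝ)⁻¹ * ∑ i, (((n : ℝ) * r i) • u i) ⬝ᵥ (((n : ℝ) * r i) • u i)
      = ∑ i, n * (u i ⬝ᵥ u i) * r i ^ 2 := by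
  have hn : (0 : ℝ) < n := by exact_mod_cast h.hn
  rw [mul_sum]
  refine sum_congr rfl fun i _ => ?_
  simp only [dotProduct_smul, smul_dotProduct, smul_eq_mul]
  field_simp

lemma dot_rr (r : Fin n → ℝ) : r ⬝ᵥ r = ∑ i, r i ^ 2 := by
  simp only [dotProduct, pow_two]

lemma b_sq_le (h : Flat u r σ) :
    (n : ℝ)⁻¹ * ∑ i, (((n : ℝ) * r i) • u i) ⬝ᵥ (((n : ℝ) * r i) • u i)
      ≤ 14 * d * (r ⬝ᵥ r) := by
  rw [h.b_sq_eq, dot_rr, mul_sum]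
  exact sum_le_sum fun i _ => mul_le_mul_of_nonneg_right (h.lev_le i) (sq_nonneg _)

lemma b_sq_sub (h : Flat u r σ) :
    |∑ i, n * (u i ⬝ᵥ u i) * r i ^ 2 - d * (r ⬝ᵥ r)| ≤ σ * (r ⬝ᵥ r) := by
  rw [dot_rr, mul_sum, ← sum_sub_distrib, mul_sum]
  refine (abs_sum_le_sum_abs _ _).trans (sum_le_sum fun i _ => ?_)
  rw [← sub_mul, abs_mul, abs_of_nonneg (sq_nonneg (r i))]
  gcongr
  exact h.hs i

lemma fluc_b (u : Fin n → Fin d → ℝ) (r : Fin n → ℝ) (i : Fin n) :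
    fluc u i *ᵥ (((n : ℝ) * r i) • u i) = (n * r i * (n * (u i ⬝ᵥ u i) - 1)) • u i := by
  rw [fluc_mulVec, dotProduct_smul, ← sub_smul, smul_eq_mul]
  congr 1; ring

lemma fluc_b_sq_le (h : Flat u r σ) :
    (n : ℝ)⁻¹ * ∑ i, (fluc u i *ᵥ (((n : ℝ) * r i) • u i)) ⬝ᵥ
      (fluc u i *ᵥ (((n : ℝ) * r i) • u i)) ≤ (14 * d) ^ 3 * (r ⬝ᵥ r) := by
  have hn : (0 : ℝ) < n := by exact_mod_cast h.hn
  have hd : (1 : ℝ) ≤ d := by exact_mod_cast h.hd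
  rw [dot_rr, mul_sum, mul_sum]
  refine sum_le_sum fun i _ => ?_
  rw [fluc_b]
  simp only [dotProduct_smul, smul_dotProduct, smul_eq_mul]
  have e : (n : ℝ)⁻¹ * (n * r i * (n * (u i ⬝ᵥ u i) - 1) *
      (n * r i * (n * (u i ⬝ᵥ u i) - 1) * (u i ⬝ᵥ u i)))
      = ((n * (u i ⬝ᵥ u i)) * (n * (u i ⬝ᵥ u i) - 1) ^ 2) * r i ^ 2 := by
    field_simp
  rw [e]
  have h0 : 0 ≤ n * (u i ⬝ᵥ u i) := mul_nonneg hn.le (dot_self_nonneg _)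
  have h1 := h.lev_le i
  have h2 : (n * (u i ⬝ᵥ u i) - 1) ^ 2 ≤ (14 * d : ℝ) ^ 2 := by
    apply sq_le_sq'
    · linarith
    · linarith
  gcongr
  calc _ ≤ (14 * d : ℝ) * (14 * d) ^ 2 := by gcongr
    _ = _ := by ring

/-- The mean of `E v` is governed by the deviations of the leverages from `d`, not by the leverages
themselves, since `∑ r_i u_i = 0`. The bias bound rests on this cancellation. -/
lemma mean_eq (h : Flat u r σ) :
    (n : ℝ)⁻¹ • ∑ i, fluc u i *ᵥ (((n : ℝ) * r i) • u i)
      = ∑ i, (r i * (n * (u i ⬝ᵥ u i) - d)) • u i := by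
  have hn : (n : ℝ) ≠ 0 := by have := h.hn; positivity
  have h1 : ∑ i, ((d - 1 : ℝ) * r i) • u i = 0 := by
    simp only [mul_smul, ← smul_sum, h.hr, smul_zero]
  rw [smul_sum, ← add_zero (∑ i, (r i * (n * (u i ⬝ᵥ u i) - d)) • u i), ← h1, ← sum_add_distrib]
  refine sum_congr rfl fun i _ => ?_
  rw [fluc_b, smul_smul, ← add_smul]
  congr 1
  field_simp
  ring

lemma mean_dot_sq (h : Flat u r σ) (x : Fin d → ℝ) :
    (x ⬝ᵥ ∑ i, (r i * (n * (u i ⬝ᵥ u i) - d)) • u i) ^ 2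
      ≤ σ ^ 2 * (r ⬝ᵥ r) * (x ⬝ᵥ x) := by
  have e : x ⬝ᵥ ∑ i, (r i * (n * (u i ⬝ᵥ u i) - d)) • u i
      = ∑ i, (r i * (n * (u i ⬝ᵥ u i) - d)) * (u i ⬝ᵥ x) := by
    rw [dotProduct_sum]
    refine sum_congr rfl fun i _ => ?_
    rw [dotProduct_smul, dotProduct_comm x (u i), smul_eq_mul]
  rw [e]
  refine (sum_mul_sq_le_sq_mul_sq _ _ _).trans ?_
  rw [h.sum_dot_sq]
  refine mul_le_mul_of_nonneg_right ?_ (dot_self_nonneg x)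
  rw [dot_rr, mul_sum]
  refine sum_le_sum fun i _ => ?_
  rw [mul_pow, mul_comm]
  exact mul_le_mul_of_nonneg_right (sq_le_sq' (abs_le.1 (h.hs i)).1 (abs_le.1 (h.hs i)).2)
    (sq_nonneg _)

lemma mean_sq (h : Flat u r σ) :
    (∑ i, (r i * (n * (u i ⬝ᵥ u i) - d)) • u i) ⬝ᵥ (∑ i, (r i * (n * (u i ⬝ᵥ u i) - d)) • u i)
      ≤ σ ^ 2 * (r ⬝ᵥ r) := by
  set μ := ∑ i, (r i * (n * (u i ⬝ᵥ u i) - d)) • u i with hμ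
  have h1 := h.mean_dot_sq μ
  rw [← hμ] at h1
  have h0 := dot_self_nonneg μ
  rcases h0.eq_or_lt with h2 | h2
  · rw [← h2]; exact mul_nonneg (sq_nonneg _) (dot_self_nonneg _)
  · rw [pow_two] at h1
    exact le_of_mul_le_mul_right h1 h2

variable {m : ℕ}

lemma EW_v (h : Flat u r σ) (x : Fin d → ℝ) : EW n m (fun ω => x ⬝ᵥ skv u r ω) = 0 := by
  simp only [skv, dotProduct_smul, smul_eq_mul]
  rw [EW_mul, EW_sum_dot (fun i => ((n : ℝ) * r i) • u i) h.sum_b, mul_zero]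

lemma EW_vv (h : Flat u r σ) (hm : 0 < m) :
    EW n m (fun ω => skv u r ω ⬝ᵥ skv u r ω)
      = (m : ℝ)⁻¹ * ∑ i, n * (u i ⬝ᵥ u i) * r i ^ 2 := by
  have hm' : (m : ℝ) ≠ 0 := by positivity
  simp only [skv, dotProduct_smul, smul_dotProduct, smul_eq_mul]
  rw [EW_mul, EW_mul, EW_sum_sq h.hn (fun i => ((n : ℝ) * r i) • u i) h.sum_b, h.b_sq_eq]
  field_simp

lemma EW_vv_le (h : Flat u r σ) (hm : 0 < m) :
    EW n m (fun ω => skv u r ω ⬝ᵥ skv u r ω) ≤ 14 * (d / m) * (r ⬝ᵥ r) := by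
  have hm' : (0 : ℝ) < m := by exact_mod_cast hm
  rw [h.EW_vv hm, ← h.b_sq_eq]
  calc _ ≤ (m : ℝ)⁻¹ * (14 * d * (r ⬝ᵥ r)) :=
        mul_le_mul_of_nonneg_left h.b_sq_le (by positivity)
    _ = _ := by field_simp

/-- `E ‖v‖² = (d/m) ‖r‖²` up to the leverage deviation. -/
lemma EW_vv_sub (h : Flat u r σ) (hm : 0 < m) :
    |EW n m (fun ω => skv u r ω ⬝ᵥ skv u r ω) - d / m * (r ⬝ᵥ r)| ≤ σ / m * (r ⬝ᵥ r) := by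
  have hm' : (0 : ℝ) < m := by exact_mod_cast hm
  have e : EW n m (fun ω => skv u r ω ⬝ᵥ skv u r ω) - d / m * (r ⬝ᵥ r)
      = (m : ℝ)⁻¹ * (∑ i, n * (u i ⬝ᵥ u i) * r i ^ 2 - d * (r ⬝ᵥ r)) := by
    rw [h.EW_vv hm]; field_simp
  rw [e, abs_mul, abs_of_pos (inv_pos.2 hm')]
  calc _ ≤ (m : ℝ)⁻¹ * (σ * (r ⬝ᵥ r)) := by gcongr; exact h.b_sq_sub
    _ = _ := by field_simp

lemma Ev_eq (ω : Fin m → Fin n) :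
    skE u ω *ᵥ skv u r ω
      = ((m : ℝ)⁻¹ * (m : ℝ)⁻¹) • ((∑ s, fluc u (ω s)) *ᵥ ∑ s, ((n : ℝ) * r (ω s)) • u (ω s)) := by
  rw [skE, skv, smul_mulVec, mulVec_smul, smul_smul]

/-- The mean of `E v` has norm at most `(σ/m) ‖r‖`. -/
lemma EW_Ev (h : Flat u r σ) (hm : 0 < m) (x : Fin d → ℝ) :
    |EW n m (fun ω => x ⬝ᵥ (skE u ω *ᵥ skv u r ω))| ≤ σ / m * (√(x ⬝ᵥ x) * √(r ⬝ᵥ r)) := by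
  have hm' : (0 : ℝ) < m := by exact_mod_cast hm
  simp only [Ev_eq, dotProduct_smul, smul_eq_mul]
  rw [EW_mul, EW_sum_mulVec_dot h.hn (fluc u) h.sum_fluc (fun i => ((n : ℝ) * r i) • u i) h.sum_b,
    h.mean_eq]
  have h1 := h.mean_dot_sq x
  set q := x ⬝ᵥ ∑ i, (r i * (n * (u i ⬝ᵥ u i) - d)) • u i
  have h2 : |q| ≤ σ * (√(x ⬝ᵥ x) * √(r ⬝ᵥ r)) := by
    apply abs_le_of_sq_le_sq
    · rw [mul_pow, mul_pow, Real.sq_sqrt (dot_self_nonneg x), Real.sq_sqrt (dot_self_nonneg r)]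
      linarith
    · have := h.hσ0; positivity
  have e : (m : ℝ)⁻¹ * (m : ℝ)⁻¹ * (m * q) = (m : ℝ)⁻¹ * q := by field_simp
  rw [e, abs_mul, abs_of_pos (inv_pos.2 hm')]
  calc _ ≤ (m : ℝ)⁻¹ * (σ * (√(x ⬝ᵥ x) * √(r ⬝ᵥ r))) := by gcongr
    _ = _ := by field_simp

lemma EW_Ev_sq (h : Flat u r σ) (hm : 0 < m) (hdm : (d : ℝ) ≤ m) :
    EW n m (fun ω => (skE u ω *ᵥ skv u r ω) ⬝ᵥ (skE u ω *ᵥ skv u r ω))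
      ≤ 9000 * (d / m) ^ 2 * (r ⬝ᵥ r) := by
  have hm' : (0 : ℝ) < m := by exact_mod_cast hm
  have hd : (1 : ℝ) ≤ d := by exact_mod_cast h.hd
  simp only [Ev_eq, dotProduct_smul, smul_dotProduct, smul_eq_mul]
  have hR := dot_self_nonneg r
  have h1 := EW_sum_mulVec_sq (m := m) h.hn (fluc u) h.sum_fluc (fun i => ((n : ℝ) * r i) • u i)
    h.sum_b (by positivity) h.fluc_sq_le h.b_sq_le h.fluc_b_sq_le
  rw [h.mean_eq] at h1
  have h2 := h.mean_sq
  have h3 : σ ^ 2 ≤ (13 * d) ^ 2 := by have := h.hσ0; have := h.hσ; gcongr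
  rw [EW_mul, EW_mul]
  set q := r ⬝ᵥ r
  have h4 : (m : ℝ) ^ 2 * (σ ^ 2 * q)
      + 3 * (m ^ 2 * (14 * d * (14 * d * q)) + m * ((14 * d) ^ 3 * q)) ≤ m ^ 2 * (9000 * d ^ 2 * q) := by
    have a1 : (m : ℝ) ^ 2 * (σ ^ 2 * q) ≤ m ^ 2 * ((13 * d) ^ 2 * q) := by gcongr
    have a2 : (m : ℝ) * ((14 * d) ^ 3 * q) ≤ m ^ 2 * (14 ^ 3 * d ^ 2 * q) := by
      have : (m : ℝ) * (14 ^ 3 * d ^ 2 * q) * d ≤ (m : ℝ) * (14 ^ 3 * d ^ 2 * q) * m := by gcongr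
      nlinarith
    have a3 : 0 ≤ (m : ℝ) ^ 2 * (d ^ 2 * q) := by positivity
    nlinarith
  calc _ ≤ (m : ℝ)⁻¹ * (m : ℝ)⁻¹ * ((m : ℝ)⁻¹ * (m : ℝ)⁻¹ * (m ^ 2 * (9000 * d ^ 2 * q))) := by
        gcongr
        refine h1.trans (le_trans ?_ h4)
        gcongr
    _ = _ := by field_simp

lemma EW_Ex_sq (h : Flat u r σ) (hm : 0 < m) (x : Fin d → ℝ) :
    EW n m (fun ω => (skE u ω *ᵥ x) ⬝ᵥ (skE u ω *ᵥ x)) ≤ 14 * (d / m) * (x ⬝ᵥ x) := by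
  have hm' : (0 : ℝ) < m := by exact_mod_cast hm
  simp only [skE, smul_mulVec, sum_mulVec, dotProduct_smul, smul_dotProduct, smul_eq_mul]
  rw [EW_mul, EW_mul, EW_sum_sq h.hn (fun i => fluc u i *ᵥ x)
    (by rw [← sum_mulVec, h.sum_fluc, zero_mulVec])]
  calc _ ≤ (m : ℝ)⁻¹ * ((m : ℝ)⁻¹ * (m * (14 * d * (x ⬝ᵥ x)))) :=
        mul_le_mul_of_nonneg_left (mul_le_mul_of_nonneg_left
          (mul_le_mul_of_nonneg_left (h.fluc_sq_le x) (by positivity)) (by positivity))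
          (by positivity)
    _ = _ := by field_simp

/-- A deterministic bound on `‖v‖²`, for use on the event where `W ⪰ 1/2` fails. -/
lemma vv_le (h : Flat u r σ) (hm : 0 < m) (ω : Fin m → Fin n) :
    skv u r ω ⬝ᵥ skv u r ω ≤ 14 * n * d * (r ⬝ᵥ r) := by
  have hm' : (0 : ℝ) < m := by exact_mod_cast hm
  have hn : (0 : ℝ) < n := by exact_mod_cast h.hn
  have h1 : ∀ i, (((n : ℝ) * r i) • u i) ⬝ᵥ (((n : ℝ) * r i) • u i) ≤ 14 * n * d * (r ⬝ᵥ r) := by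
    intro i
    simp only [dotProduct_smul, smul_dotProduct, smul_eq_mul]
    have a1 : r i ^ 2 ≤ r ⬝ᵥ r := by
      rw [dot_rr]
      exact single_le_sum (f := fun i => r i ^ 2) (fun _ _ => sq_nonneg _) (mem_univ i)
    calc (n : ℝ) * r i * (n * r i * (u i ⬝ᵥ u i)) = n * (r i ^ 2 * (n * (u i ⬝ᵥ u i))) := by ring
      _ ≤ n * ((r ⬝ᵥ r) * (14 * d)) := by
          have := h.lev_le i
          have := mul_nonneg hn.le (dot_self_nonneg (u i))
          have := dot_self_nonneg r
          gcongr
      _ = _ := by ring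
  set b : Fin m → Fin d → ℝ := fun s => ((n : ℝ) * r (ω s)) • u (ω s) with hb
  have h2 : (∑ s, b s) ⬝ᵥ (∑ s, b s) ≤ m * ∑ s, b s ⬝ᵥ b s := by
    simp only [dotProduct, Finset.sum_apply]
    rw [sum_comm, mul_sum]
    refine sum_le_sum fun k _ => ?_
    have := sq_sum_le_card_mul_sum_sq (s := (univ : Finset (Fin m))) (f := fun s => b s k)
    simpa [pow_two] using this
  have h3 : ∑ s, b s ⬝ᵥ b s ≤ m * (14 * n * d * (r ⬝ᵥ r)) := by
    calc _ ≤ ∑ s : Fin m, 14 * n * d * (r ⬝ᵥ r) := sum_le_sum fun s _ => h1 (ω s)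
      _ = _ := by simp
  have e : skv u r ω ⬝ᵥ skv u r ω = (m : ℝ)⁻¹ * ((m : ℝ)⁻¹ * ((∑ s, b s) ⬝ᵥ (∑ s, b s))) := by
    simp only [skv, dotProduct_smul, smul_dotProduct, smul_eq_mul, hb]
  rw [e]
  calc _ ≤ (m : ℝ)⁻¹ * ((m : ℝ)⁻¹ * (m * (m * (14 * n * d * (r ⬝ᵥ r))))) := by
        gcongr; exact h2.trans (by gcongr)
    _ = _ := by field_simp

end Flat

/-! ### Bias and variance for fixed signs -/

open Classical in
/-- Indicator of the complement of the event `Good u`. -/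
def badI {n d m : ℕ} (u : Fin n → Fin d → ℝ) (ω : Fin m → Fin n) : ℝ := if Good u ω then 0 else 1

/-- The error `γ = W⁻¹ v` of the sketched estimator in whitened coordinates. -/
def skγ {n d m : ℕ} (u : Fin n → Fin d → ℝ) (r : Fin n → ℝ) (ω : Fin m → Fin n) : Fin d → ℝ :=
  (sk u ω)⁻¹ *ᵥ skv u r ω

lemma badI_sq {n d m : ℕ} (u : Fin n → Fin d → ℝ) (ω : Fin m → Fin n) :
    badI u ω ^ 2 = badI u ω := by
  unfold badI; split_ifs <;> norm_num

lemma badI_nonneg {n d m : ℕ} (u : Fin n → Fin d → ℝ) (ω : Fin m → Fin n) : 0 ≤ badI u ω := by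
  unfold badI; split_ifs <;> norm_num

lemma EW_mul_le {n m : ℕ} {f g : (Fin m → Fin n) → ℝ} {A B c : ℝ}
    (hf : EW n m (fun ω => f ω ^ 2) ≤ A) (hg : EW n m (fun ω => g ω ^ 2) ≤ B) (hc : 0 ≤ c)
    (h : A * B ≤ c ^ 2) : EW n m (fun ω => f ω * g ω) ≤ c := by
  have hA : 0 ≤ A := (EW_nonneg fun ω => sq_nonneg (f ω)).trans hf
  calc _ ≤ _ := EW_mul_le_sqrt f g
    _ ≤ √A * √B := by gcongr
    _ = √(A * B) := (Real.sqrt_mul hA B).symm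
    _ ≤ c := Real.sqrt_le_iff.2 ⟨hc, h⟩

/-- Resolvent identities: with `η = W⁻¹ E v` one has `γ = v - η` and `E γ = η`. -/
lemma Good.skE_skγ {n d m : ℕ} (hm : 0 < m) {u : Fin n → Fin d → ℝ} {ω : Fin m → Fin n}
    (h : Good u ω) (r : Fin n → ℝ) :
    skγ u r ω = skv u r ω - (sk u ω)⁻¹ *ᵥ (skE u ω *ᵥ skv u r ω) ∧
    skE u ω *ᵥ skγ u r ω = (sk u ω)⁻¹ *ᵥ (skE u ω *ᵥ skv u r ω) := by
  have hW : sk u ω *ᵥ skγ u r ω = skv u r ω := by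
    rw [skγ, mulVec_mulVec, mul_nonsing_inv _ h.isUnit, one_mulVec]
  have h2 : skE u ω *ᵥ skγ u r ω = (sk u ω)⁻¹ *ᵥ (skE u ω *ᵥ skv u r ω) := by
    have hc : sk u ω * skE u ω = skE u ω * sk u ω := by
      rw [sk_eq hm, add_mul, mul_add, one_mul, mul_one]
    have : sk u ω *ᵥ (skE u ω *ᵥ skγ u r ω) = skE u ω *ᵥ skv u r ω := by
      rw [mulVec_mulVec, hc, ← mulVec_mulVec, hW]
    rw [← this, mulVec_mulVec (skE u ω *ᵥ skγ u r ω), nonsing_inv_mul _ h.isUnit, one_mulVec]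
  refine ⟨?_, h2⟩
  rw [← h2]
  have := hW
  rw [sk_eq hm, add_mulVec, one_mulVec] at this
  rw [← this]; abel

/-- Second-order expansion of a coordinate of `γ` in the fluctuation `E = W - 1`. -/
lemma Good.dot_skγ {n d m : ℕ} (hm : 0 < m) {u : Fin n → Fin d → ℝ} {ω : Fin m → Fin n}
    (h : Good u ω) (r : Fin n → ℝ) (x : Fin d → ℝ) :
    x ⬝ᵥ skγ u r ω ≤ x ⬝ᵥ skv u r ω - x ⬝ᵥ (skE u ω *ᵥ skv u r ω)
      + √((skE u ω *ᵥ x) ⬝ᵥ (skE u ω *ᵥ x))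
        * √(4 * ((skE u ω *ᵥ skv u r ω) ⬝ᵥ (skE u ω *ᵥ skv u r ω))) := by
  obtain ⟨h1, h2⟩ := h.skE_skγ hm r
  set η := (sk u ω)⁻¹ *ᵥ (skE u ω *ᵥ skv u r ω) with hη
  have h3 : η = skE u ω *ᵥ skv u r ω - skE u ω *ᵥ η := by
    rw [← mulVec_sub, ← h1, h2]
  have h4 : x ⬝ᵥ (skE u ω *ᵥ η) = (skE u ω *ᵥ x) ⬝ᵥ η := by
    rw [dotProduct_mulVec, ← mulVec_transpose, skE_transpose]
  have h5 : x ⬝ᵥ skγ u r ω = x ⬝ᵥ skv u r ω - x ⬝ᵥ (skE u ω *ᵥ skv u r ω)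
      + (skE u ω *ᵥ x) ⬝ᵥ η := by
    rw [← h4, h1, dotProduct_sub]
    nth_rewrite 1 [h3]
    rw [dotProduct_sub]; ring
  rw [h5, ← Real.sqrt_mul (dot_self_nonneg _)]
  gcongr
  refine Real.le_sqrt_of_sq_le ((dot_sq_le _ _).trans ?_)
  exact mul_le_mul_of_nonneg_left (h.inv_le _) (dot_self_nonneg _)

/-- Comparison of `‖γ‖²` with `‖v‖²` by weighted AM–GM applied to the cross term of `γ = v - W⁻¹ E v`. -/
lemma Good.skγ_sq {n d m : ℕ} (hm : 0 < m) {u : Fin n → Fin d → ℝ} {ω : Fin m → Fin n}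
    (h : Good u ω) (r : Fin n → ℝ) {k : ℝ} (hk : 0 < k) (hk1 : k ≤ 1) :
    |skγ u r ω ⬝ᵥ skγ u r ω - skv u r ω ⬝ᵥ skv u r ω| ≤ k * (skv u r ω ⬝ᵥ skv u r ω)
      + 8 / k * ((skE u ω *ᵥ skv u r ω) ⬝ᵥ (skE u ω *ᵥ skv u r ω)) := by
  obtain ⟨h1, -⟩ := h.skE_skγ hm r
  have h2 := h.inv_le (skE u ω *ᵥ skv u r ω)
  set η := (sk u ω)⁻¹ *ᵥ (skE u ω *ᵥ skv u r ω) with hη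
  set v := skv u r ω
  set e := (skE u ω *ᵥ v) ⬝ᵥ (skE u ω *ᵥ v)
  have h0 : 0 ≤ e := dot_self_nonneg _
  have hη0 : 0 ≤ η ⬝ᵥ η := dot_self_nonneg _
  have h3 : skγ u r ω ⬝ᵥ skγ u r ω - v ⬝ᵥ v = η ⬝ᵥ η - 2 * (v ⬝ᵥ η) := by
    rw [h1]; simp only [dotProduct_sub, sub_dotProduct]
    rw [dotProduct_comm η v]; ring
  have hp : ∀ s : ℝ, 0 ≤ k * (v ⬝ᵥ v) + k⁻¹ * (s ^ 2 * (η ⬝ᵥ η)) + 2 * (s * (v ⬝ᵥ η)) := by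
    intro s
    have := dot_self_nonneg (k • v + s • η)
    simp only [dotProduct_add, add_dotProduct, smul_dotProduct, dotProduct_smul, smul_eq_mul] at this
    rw [dotProduct_comm η v] at this
    have h5 := mul_nonneg (inv_nonneg.2 hk.le) this
    have : k⁻¹ * (k * (k * v ⬝ᵥ v) + s * (k * v ⬝ᵥ η) + (k * (s * v ⬝ᵥ η) + s * (s * η ⬝ᵥ η)))
      = k * (v ⬝ᵥ v) + k⁻¹ * (s ^ 2 * (η ⬝ᵥ η)) + 2 * (s * (v ⬝ᵥ η)) := by field_simp; ring
    linarith
  have hp1 := hp 1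
  have hp2 := hp (-1)
  have hk' : 1 ≤ k⁻¹ := (one_le_inv₀ hk).2 hk1
  have h6 : k⁻¹ * (η ⬝ᵥ η) ≤ k⁻¹ * (4 * e) := by gcongr
  have h7 : η ⬝ᵥ η ≤ k⁻¹ * (4 * e) := h2.trans (by nlinarith)
  rw [h3, abs_le, div_eq_mul_inv]
  constructor <;> nlinarith

namespace Flat

variable {n d m : ℕ} {u : Fin n → Fin d → ℝ} {r : Fin n → ℝ} {σ δ : ℝ}

/-- The mean of a coordinate of `γ`, restricted to `W ⪰ 1/2`, for fixed signs. In the expansion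
`Good.dot_skγ` the terms that are linear in `v` and `E v` are integrated over all draws and the
contribution of the bad event is subtracted by Cauchy–Schwarz. -/
lemma bias (h : Flat u r σ) (hm : 0 < m) (hdm : (d : ℝ) ≤ m) (hδ0 : 0 ≤ δ)
    (hδ : δ * (n * d ^ 2) ≤ 1) (hq : EW n m (badI u) ≤ 392 * δ * (d / m)) (x : Fin d → ℝ) :
    EW n m (fun ω => (1 - badI u ω) * (x ⬝ᵥ skγ u r ω))
      ≤ (75 / m + σ / m + 2600 * (d / m * √(d / m))) * (√(x ⬝ᵥ x) * √(r ⬝ᵥ r)) := by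
  have hm' : (0 : ℝ) < m := by exact_mod_cast hm
  have hd : (1 : ℝ) ≤ d := by exact_mod_cast h.hd
  have hn : (1 : ℝ) ≤ n := by exact_mod_cast h.hn
  set t : ℝ := d / m with ht
  have ht0 : 0 < t := by positivity
  have ht1 : t ≤ 1 := (div_le_one hm').2 hdm
  have hδd : δ * d ^ 2 ≤ 1 := by nlinarith [mul_nonneg hδ0 (sq_nonneg (d : ℝ))]
  have hδ1 : δ ≤ 1 := (le_mul_of_one_le_right hδ0 (one_le_pow₀ hd)).trans hδd
  have hX := dot_self_nonneg x
  have hR := dot_self_nonneg r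
  set N : ℝ := √(x ⬝ᵥ x) * √(r ⬝ᵥ r) with hN
  have hN0 : 0 ≤ N := by positivity
  have hN2 : N ^ 2 = (x ⬝ᵥ x) * (r ⬝ᵥ r) := by
    rw [hN, mul_pow, Real.sq_sqrt hX, Real.sq_sqrt hR]
  have hst : √t ^ 2 = t := Real.sq_sqrt ht0.le
  have hbad : EW n m (fun ω => badI u ω ^ 2) ≤ 392 * δ * t := by simpa only [badI_sq] using hq
  have b1 : EW n m (fun ω => badI u ω * (-(x ⬝ᵥ skv u r ω))) ≤ 75 / m * N := by
    have hB : EW n m (fun ω => (-(x ⬝ᵥ skv u r ω)) ^ 2) ≤ (x ⬝ᵥ x) * (14 * t * (r ⬝ᵥ r)) := by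
      refine le_trans ?_ (mul_le_mul_of_nonneg_left (h.EW_vv_le hm) hX)
      rw [← EW_mul]
      exact EW_mono fun ω => by rw [neg_sq]; exact dot_sq_le _ _
    refine EW_mul_le hbad hB (by positivity) ?_
    rw [mul_pow, hN2]
    have : δ * t ^ 2 ≤ 1 / m ^ 2 := by
      rw [ht, div_pow, ← mul_div_assoc]; gcongr
    calc _ = 5488 * (δ * t ^ 2) * ((x ⬝ᵥ x) * (r ⬝ᵥ r)) := by ring
      _ ≤ 5625 * (1 / m ^ 2) * ((x ⬝ᵥ x) * (r ⬝ᵥ r)) := by gcongr; norm_num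
      _ = _ := by ring
  have b2 : -EW n m (fun ω => x ⬝ᵥ (skE u ω *ᵥ skv u r ω)) ≤ σ / m * N :=
    (neg_le_abs _).trans (h.EW_Ev hm x)
  have b3 : EW n m (fun ω => badI u ω * (x ⬝ᵥ (skE u ω *ᵥ skv u r ω))) ≤ 1880 * (t * √t) * N := by
    have hB : EW n m (fun ω => (x ⬝ᵥ (skE u ω *ᵥ skv u r ω)) ^ 2)
        ≤ (x ⬝ᵥ x) * (9000 * t ^ 2 * (r ⬝ᵥ r)) := by
      refine le_trans ?_ (mul_le_mul_of_nonneg_left (h.EW_Ev_sq hm hdm) hX)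
      rw [← EW_mul]
      exact EW_mono fun ω => dot_sq_le _ _
    refine EW_mul_le hbad hB (by positivity) ?_
    rw [mul_pow, hN2, mul_pow, mul_pow, hst]
    calc _ = 3528000 * (δ * (t ^ 3 * ((x ⬝ᵥ x) * (r ⬝ᵥ r)))) := by ring
      _ ≤ 3534400 * (1 * (t ^ 3 * ((x ⬝ᵥ x) * (r ⬝ᵥ r)))) := by gcongr; norm_num
      _ = _ := by ring
  have b4 : EW n m (fun ω => √((skE u ω *ᵥ x) ⬝ᵥ (skE u ω *ᵥ x))
        * √(4 * ((skE u ω *ᵥ skv u r ω) ⬝ᵥ (skE u ω *ᵥ skv u r ω)))) ≤ 720 * (t * √t) * N := by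
    have hA : EW n m (fun ω => √((skE u ω *ᵥ x) ⬝ᵥ (skE u ω *ᵥ x)) ^ 2)
        ≤ 14 * t * (x ⬝ᵥ x) := by
      simp only [Real.sq_sqrt (dot_self_nonneg _)]
      exact h.EW_Ex_sq hm x
    have hB : EW n m (fun ω => √(4 * ((skE u ω *ᵥ skv u r ω) ⬝ᵥ (skE u ω *ᵥ skv u r ω))) ^ 2)
        ≤ 4 * (9000 * t ^ 2 * (r ⬝ᵥ r)) := by
      simp only [Real.sq_sqrt (mul_nonneg (by norm_num : (0 : ℝ) ≤ 4) (dot_self_nonneg _))]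
      rw [EW_mul]
      exact mul_le_mul_of_nonneg_left (h.EW_Ev_sq hm hdm) (by norm_num)
    refine EW_mul_le hA hB (by positivity) ?_
    rw [mul_pow, hN2, mul_pow, mul_pow, hst]
    calc _ = 504000 * (t ^ 3 * ((x ⬝ᵥ x) * (r ⬝ᵥ r))) := by ring
      _ ≤ 518400 * (t ^ 3 * ((x ⬝ᵥ x) * (r ⬝ᵥ r))) := by gcongr; norm_num
      _ = _ := by ring
  have key : EW n m (fun ω => (1 - badI u ω) * (x ⬝ᵥ skγ u r ω))
      ≤ EW n m (fun ω => x ⬝ᵥ skv u r ω + badI u ω * (-(x ⬝ᵥ skv u r ω))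
        - x ⬝ᵥ (skE u ω *ᵥ skv u r ω) + badI u ω * (x ⬝ᵥ (skE u ω *ᵥ skv u r ω))
        + √((skE u ω *ᵥ x) ⬝ᵥ (skE u ω *ᵥ x))
        * √(4 * ((skE u ω *ᵥ skv u r ω) ⬝ᵥ (skE u ω *ᵥ skv u r ω)))) := by
    refine EW_mono fun ω => ?_
    by_cases hg : Good u ω
    · simp only [badI, hg, if_true]
      have := hg.dot_skγ hm r x
      linarith
    · simp only [badI, hg, if_false]
      have : 0 ≤ √((skE u ω *ᵥ x) ⬝ᵥ (skE u ω *ᵥ x))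
        * √(4 * ((skE u ω *ᵥ skv u r ω) ⬝ᵥ (skE u ω *ᵥ skv u r ω))) := by positivity
      linarith
  refine key.trans ?_
  rw [EW_add, EW_add, EW_sub, EW_add, h.EW_v]
  linarith

/-- The mean of `‖γ‖²`, restricted to `W ⪰ 1/2`, for fixed signs. -/
lemma variance (h : Flat u r σ) (hm : 0 < m) (hdm : (d : ℝ) ≤ m)
    (hδ : δ * (n * d ^ 2) ≤ 1) (hq : EW n m (badI u) ≤ 392 * δ * (d / m)) :
    |EW n m (fun ω => (1 - badI u ω) * (skγ u r ω ⬝ᵥ skγ u r ω)) - d / m * (r ⬝ᵥ r)|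
      ≤ (5488 / m + σ / m + 72014 * (d / m * √(d / m))) * (r ⬝ᵥ r) := by
  have hm' : (0 : ℝ) < m := by exact_mod_cast hm
  have hd : (1 : ℝ) ≤ d := by exact_mod_cast h.hd
  have hn : (1 : ℝ) ≤ n := by exact_mod_cast h.hn
  have c1 := h.EW_vv_sub hm
  have c2 := h.EW_vv_le hm
  have c3 := h.EW_Ev_sq hm hdm
  set t : ℝ := d / m with ht
  have ht0 : 0 < t := by positivity
  have ht1 : t ≤ 1 := (div_le_one hm').2 hdm
  have hR := dot_self_nonneg r
  have hk0 : 0 < √t := Real.sqrt_pos.2 ht0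
  have hk1 : √t ≤ 1 := Real.sqrt_le_one.2 ht1
  have hst : √t * √t = t := Real.mul_self_sqrt ht0.le
  -- `Good.skγ_sq` is used with `k = √(d/m)`, which balances `k E‖v‖²` against `E‖E v‖² / k`.
  set V := EW n m (fun ω => skv u r ω ⬝ᵥ skv u r ω) with hV
  set e := EW n m (fun ω => (skE u ω *ᵥ skv u r ω) ⬝ᵥ (skE u ω *ᵥ skv u r ω)) with he
  have d1 : EW n m (fun ω => badI u ω * (skv u r ω ⬝ᵥ skv u r ω)) ≤ 5488 / m * (r ⬝ᵥ r) := by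
    calc _ ≤ EW n m (fun ω => (14 * n * d * (r ⬝ᵥ r)) * badI u ω) := EW_mono fun ω => by
          rw [mul_comm]
          exact mul_le_mul_of_nonneg_right (h.vv_le hm ω) (badI_nonneg u ω)
      _ ≤ (14 * n * d * (r ⬝ᵥ r)) * (392 * δ * t) := by
          rw [EW_mul]; gcongr
      _ = 5488 * ((δ * (n * d ^ 2)) / m) * (r ⬝ᵥ r) := by rw [ht]; ring
      _ ≤ 5488 * (1 / m) * (r ⬝ᵥ r) := by gcongr
      _ = _ := by ring
  have d0 : 0 ≤ EW n m (fun ω => badI u ω * (skv u r ω ⬝ᵥ skv u r ω)) :=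
    EW_nonneg fun ω => mul_nonneg (badI_nonneg u ω) (dot_self_nonneg _)
  have d2 : √t * V + 8 / √t * e ≤ 72014 * (t * √t) * (r ⬝ᵥ r) := by
    have a1 : √t * V ≤ √t * (14 * t * (r ⬝ᵥ r)) := by gcongr
    have a2 : 8 / √t * e ≤ 8 / √t * (9000 * t ^ 2 * (r ⬝ᵥ r)) := by gcongr
    have a3 : 8 / √t * (9000 * t ^ 2 * (r ⬝ᵥ r)) = 72000 * (t * √t) * (r ⬝ᵥ r) := by
      field_simp
      rw [pow_two (√t), hst]; ring
    linarith
  have up : EW n m (fun ω => (1 - badI u ω) * (skγ u r ω ⬝ᵥ skγ u r ω))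
      ≤ V - EW n m (fun ω => badI u ω * (skv u r ω ⬝ᵥ skv u r ω)) + (√t * V + 8 / √t * e) := by
    rw [hV, he, ← EW_mul, ← EW_mul, ← EW_sub, ← EW_add, ← EW_add]
    refine EW_mono fun ω => ?_
    have n1 := dot_self_nonneg (skv u r ω)
    have n2 := dot_self_nonneg (skE u ω *ᵥ skv u r ω)
    by_cases hg : Good u ω
    · simp only [badI, hg, if_true]
      have := (abs_le.1 (hg.skγ_sq hm r hk0 hk1)).2
      linarith
    · simp only [badI, hg, if_false]
      have : 0 ≤ √t * (skv u r ω ⬝ᵥ skv u r ω)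
        + 8 / √t * ((skE u ω *ᵥ skv u r ω) ⬝ᵥ (skE u ω *ᵥ skv u r ω)) := by positivity
      linarith
  have lo : V - EW n m (fun ω => badI u ω * (skv u r ω ⬝ᵥ skv u r ω)) - (√t * V + 8 / √t * e)
      ≤ EW n m (fun ω => (1 - badI u ω) * (skγ u r ω ⬝ᵥ skγ u r ω)) := by
    rw [hV, he, ← EW_mul, ← EW_mul, ← EW_sub, ← EW_add, ← EW_sub]
    refine EW_mono fun ω => ?_
    have n1 := dot_self_nonneg (skv u r ω)
    have n2 := dot_self_nonneg (skE u ω *ᵥ skv u r ω)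
    by_cases hg : Good u ω
    · simp only [badI, hg, if_true]
      have := (abs_le.1 (hg.skγ_sq hm r hk0 hk1)).1
      linarith
    · simp only [badI, hg, if_false]
      have : 0 ≤ √t * (skv u r ω ⬝ᵥ skv u r ω)
        + 8 / √t * ((skE u ω *ᵥ skv u r ω) ⬝ᵥ (skE u ω *ᵥ skv u r ω)) := by positivity
      linarith
  rw [abs_le] at c1 ⊢
  constructor <;> linarith

/-- Failure probability of the sketched Gram matrix. -/
lemma EW_badI_le (h : Flat u r σ) (hm : 0 < m) :
    EW n m (badI u) ≤ d * Real.exp (-(m / (196 * d))) := by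
  have hm' : (0 : ℝ) < m := by exact_mod_cast hm
  refine chernoff h.hn h.hd u h.hu h.lev_le _ fun ω => ?_
  by_cases hg : Good u ω
  · left; simp [badI, hg]
  · right
    refine ⟨by simp [badI, hg], ?_⟩
    simp only [Good, not_forall, not_le] at hg
    obtain ⟨x, hx⟩ := hg
    refine ⟨x, ?_⟩
    rw [sk, smul_mulVec, dotProduct_smul, smul_eq_mul] at hx
    have := mul_lt_mul_of_pos_left hx hm'
    rw [← mul_assoc, mul_inv_cancel₀ hm'.ne', one_mul] at this
    linarith

end Flat

/-! ### Quadratic forms in random signs -/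

/-- Expectation over `N` independent uniform signs. -/
def ER (N : ℕ) (f : (Fin N → Bool) → ℝ) : ℝ := (1 / 2 : ℝ) ^ N * ∑ ξ, f ξ

lemma ER_zero (f : (Fin 0 → Bool) → ℝ) : ER 0 f = f Fin.elim0 := by
  simp only [ER, pow_zero, one_mul]
  rw [Fintype.sum_unique]
  exact congrArg f (Subsingleton.elim _ _)

lemma ER_succ {N : ℕ} (f : (Fin (N + 1) → Bool) → ℝ) :
    ER (N + 1) f = (ER N (fun ξ => f (Fin.cons true ξ)) + ER N (fun ξ => f (Fin.cons false ξ))) / 2 := by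
  simp only [ER]
  rw [pow_succ', ← (Fin.consEquiv fun _ : Fin (N + 1) => Bool).sum_comp, Fintype.sum_prod_type]
  simp only [Fintype.univ_bool, sum_insert, mem_singleton, Bool.true_eq_false, not_false_eq_true,
    sum_singleton]
  simp only [Fin.consEquiv, Equiv.coe_fn_mk]
  ring

lemma ER_mono {N : ℕ} {f g : (Fin N → Bool) → ℝ} (h : ∀ ξ, f ξ ≤ g ξ) : ER N f ≤ ER N g := by
  unfold ER
  gcongr with ξ
  exact h ξ

lemma ER_mul {N : ℕ} (c : ℝ) (f : (Fin N → Bool) → ℝ) :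
    ER N (fun ξ => c * f ξ) = c * ER N f := by
  simp [ER, ← mul_sum]; ring

lemma ER_add {N : ℕ} (f g : (Fin N → Bool) → ℝ) :
    ER N (fun ξ => f ξ + g ξ) = ER N f + ER N g := by
  simp [ER, sum_add_distrib, mul_add]

lemma ER_sum {N : ℕ} {ι : Type*} (s : Finset ι) (f : ι → (Fin N → Bool) → ℝ) :
    ER N (fun ξ => ∑ i ∈ s, f i ξ) = ∑ i ∈ s, ER N (f i) := by
  simp only [ER, ← mul_sum]
  rw [sum_comm]

lemma coer_isUnit {d : ℕ} {M : Matrix (Fin d) (Fin d) ℝ} {k : ℝ} (hk : 0 < k)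
    (h : ∀ z, k * (z ⬝ᵥ z) ≤ z ⬝ᵥ (M *ᵥ z)) : IsUnit M.det := by
  rw [isUnit_iff_ne_zero]
  intro h0
  obtain ⟨x, hx, hx0⟩ := Matrix.exists_mulVec_eq_zero_iff.2 h0
  have := h x
  rw [hx0, dotProduct_zero] at this
  have h1 : x ⬝ᵥ x = 0 := le_antisymm (by
    by_contra hc; push Not at hc; linarith [mul_pos hk hc]) (dot_self_nonneg x)
  exact hx (dotProduct_self_eq_zero.1 h1)

lemma dot_symm {d : ℕ} {M : Matrix (Fin d) (Fin d) ℝ} (hM : Mᵀ = M) (x y : Fin d → ℝ) :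
    x ⬝ᵥ (M *ᵥ y) = y ⬝ᵥ (M *ᵥ x) := by
  rw [dotProduct_mulVec, ← mulVec_transpose, hM, dotProduct_comm]

lemma inv_symm {d : ℕ} {M : Matrix (Fin d) (Fin d) ℝ} (hM : Mᵀ = M) : (M⁻¹)ᵀ = M⁻¹ := by
  rw [transpose_nonsing_inv, hM]

/-- Variational lower bound for the inverse quadratic form. -/
lemma inv_quad_ge {d : ℕ} {M : Matrix (Fin d) (Fin d) ℝ} {k : ℝ} (hk : 0 < k) (hM : Mᵀ = M)
    (h : ∀ z, k * (z ⬝ᵥ z) ≤ z ⬝ᵥ (M *ᵥ z)) (w z : Fin d → ℝ) :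
    2 * (w ⬝ᵥ z) - z ⬝ᵥ (M *ᵥ z) ≤ w ⬝ᵥ (M⁻¹ *ᵥ w) := by
  have hu := coer_isUnit hk h
  set g := M⁻¹ *ᵥ w with hg
  have hw : M *ᵥ g = w := by rw [hg, mulVec_mulVec, mul_nonsing_inv _ hu, one_mulVec]
  have h1 := h (z - g)
  have h2 := mul_nonneg hk.le (dot_self_nonneg (z - g))
  have h3 : (z - g) ⬝ᵥ (M *ᵥ (z - g)) = z ⬝ᵥ (M *ᵥ z) - 2 * (w ⬝ᵥ z) + w ⬝ᵥ g := by
    simp only [mulVec_sub, dotProduct_sub, sub_dotProduct, dot_symm hM g z, hw,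
      dotProduct_comm z w, dotProduct_comm g w]; ring
  linarith

lemma inv_quad_le {d : ℕ} {M : Matrix (Fin d) (Fin d) ℝ} {k : ℝ} (hk : 0 < k)
    (h : ∀ z, k * (z ⬝ᵥ z) ≤ z ⬝ᵥ (M *ᵥ z)) (u : Fin d → ℝ) :
    u ⬝ᵥ (M⁻¹ *ᵥ u) ≤ k⁻¹ * (u ⬝ᵥ u) := by
  have hu := coer_isUnit hk h
  set g := M⁻¹ *ᵥ u with hg
  have hw : M *ᵥ g = u := by rw [hg, mulVec_mulVec, mul_nonsing_inv _ hu, one_mulVec]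
  have h1 := h g
  rw [hw, dotProduct_comm g u] at h1
  have h2 := dot_self_nonneg (k • g - u)
  simp only [dotProduct_sub, sub_dotProduct, smul_dotProduct, dotProduct_smul, smul_eq_mul] at h2
  rw [dotProduct_comm g u] at h2
  rw [← mul_le_mul_iff_right₀ hk, ← mul_assoc, mul_inv_cancel₀ hk.ne', one_mul]
  nlinarith

/-- Averaging over one sign, by `cosh (2 b) ≤ exp (2 b²)`. -/
lemma avg_exp {a b c : ℝ} :
    (Real.exp (a + 2 * b + c) + Real.exp (a - 2 * b + c)) / 2
      ≤ Real.exp (a + 2 * b ^ 2 + c) := by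
  have h := Real.cosh_le_exp_half_sq (2 * b)
  rw [Real.cosh_eq] at h
  calc _ = Real.exp (a + c) * ((Real.exp (2 * b) + Real.exp (-(2 * b))) / 2) := by
        rw [mul_div_assoc', mul_add, ← Real.exp_add, ← Real.exp_add]; ring_nf
    _ ≤ Real.exp (a + c) * Real.exp ((2 * b) ^ 2 / 2) := by gcongr
    _ = _ := by rw [← Real.exp_add]; ring_nf

lemma mulVec_rank_one {d : ℕ} (u z : Fin d → ℝ) :
    z ⬝ᵥ (vecMulVec u u *ᵥ z) = (u ⬝ᵥ z) ^ 2 := by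
  rw [vecMulVec_mulVec, op_smul_eq_smul, dotProduct_smul, smul_eq_mul, dotProduct_comm z u]; ring

lemma sum_vec_transpose {d N : ℕ} (u : Fin N → Fin d → ℝ) :
    (∑ j, vecMulVec (u j) (u j))ᵀ = ∑ j, vecMulVec (u j) (u j) := by
  simp [transpose_sum, transpose_vecMulVec]

lemma quad_pm {d : ℕ} {Q : Matrix (Fin d) (Fin d) ℝ} (hQ : Qᵀ = Q) (w u : Fin d → ℝ) (s : ℝ) :
    (w + s • u) ⬝ᵥ (Q *ᵥ (w + s • u))
      = w ⬝ᵥ (Q *ᵥ w) + 2 * s * (u ⬝ᵥ (Q *ᵥ w)) + s ^ 2 * (u ⬝ᵥ (Q *ᵥ u)) := by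
  simp only [mulVec_add, mulVec_smul, dotProduct_add, add_dotProduct, smul_dotProduct,
    dotProduct_smul, smul_eq_mul]
  rw [dot_symm hQ w u]; ring

/-- Exponential moment of `⟨S, B⁻¹ S⟩` for the shifted signed sum `S = w + ∑ ξ_j u_j`. Averaging over one
sign produces `exp (2 ⟨u_j, B⁻¹ w⟩²)`, which is absorbed by decreasing `B` by `2 u_j u_jᵀ`; what is
left is the form at `w` with the decreased matrix and the diagonal terms `⟨u_j, B⁻¹ u_j⟩`. -/
lemma ER_exp_quad {d N : ℕ} (u : Fin N → Fin d → ℝ) (w : Fin d → ℝ)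
    (B : Matrix (Fin d) (Fin d) ℝ) (hB : Bᵀ = B) {k : ℝ} (hk : 0 < k)
    (h : ∀ z, k * (z ⬝ᵥ z) ≤ z ⬝ᵥ ((B - (2 : ℝ) • ∑ j, vecMulVec (u j) (u j)) *ᵥ z)) :
    ER N (fun ξ => Real.exp ((w + ∑ j, sgn (ξ j) • u j) ⬝ᵥ (B⁻¹ *ᵥ (w + ∑ j, sgn (ξ j) • u j))))
      ≤ Real.exp (w ⬝ᵥ ((B - (2 : ℝ) • ∑ j, vecMulVec (u j) (u j))⁻¹ *ᵥ w)
        + k⁻¹ * ∑ j, u j ⬝ᵥ u j) := by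
  induction N generalizing w with
  | zero => simp [ER_zero]
  | succ N ih =>
    set u' : Fin N → Fin d → ℝ := fun j => u j.succ with hu'
    set B' := B - (2 : ℝ) • ∑ j, vecMulVec (u' j) (u' j) with hB'
    have hC : B - (2 : ℝ) • ∑ j, vecMulVec (u j) (u j) = B' - (2 : ℝ) • vecMulVec (u 0) (u 0) := by
      rw [Fin.sum_univ_succ, smul_add, hB']; abel
    have hB't : B'ᵀ = B' := by
      rw [hB', transpose_sub, transpose_smul, sum_vec_transpose, hB]
    rw [hC] at h ⊢
    set C := B' - (2 : ℝ) • vecMulVec (u 0) (u 0) with hCdef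
    have hCt : Cᵀ = C := by
      rw [hCdef, transpose_sub, transpose_smul, transpose_vecMulVec, hB't]
    have hCz : ∀ z, z ⬝ᵥ (C *ᵥ z) = z ⬝ᵥ (B' *ᵥ z) - 2 * (u 0 ⬝ᵥ z) ^ 2 := by
      intro z
      rw [hCdef, sub_mulVec, smul_mulVec, dotProduct_sub, dotProduct_smul, mulVec_rank_one,
        smul_eq_mul]
    have h' : ∀ z, k * (z ⬝ᵥ z) ≤ z ⬝ᵥ (B' *ᵥ z) := by
      intro z
      have h1 := h z
      rw [hCz] at h1
      nlinarith [sq_nonneg (u 0 ⬝ᵥ z)]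
    have hstep : ∀ b : Bool, ER N (fun ξ => Real.exp
        ((w + ∑ j, sgn ((Fin.cons b ξ : Fin (N + 1) → Bool) j) • u j) ⬝ᵥ
          (B⁻¹ *ᵥ (w + ∑ j, sgn ((Fin.cons b ξ : Fin (N + 1) → Bool) j) • u j))))
        ≤ Real.exp ((w + sgn b • u 0) ⬝ᵥ (B'⁻¹ *ᵥ (w + sgn b • u 0))
          + k⁻¹ * ∑ j, u' j ⬝ᵥ u' j) := by
      intro b
      simp only [Fin.sum_univ_succ, Fin.cons_zero, Fin.cons_succ, ← add_assoc]
      exact ih u' (w + sgn b • u 0) h'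
    rw [ER_succ]
    have hQt := inv_symm hB't
    refine (div_le_div_of_nonneg_right (add_le_add (hstep true) (hstep false)) (by norm_num)).trans ?_
    rw [quad_pm hQt, quad_pm hQt]
    simp only [sgn, if_true, Bool.false_eq_true, if_false]
    set q := u 0 ⬝ᵥ (B'⁻¹ *ᵥ u 0) with hq
    set b := u 0 ⬝ᵥ (B'⁻¹ *ᵥ w) with hb
    have h1 : q ≤ k⁻¹ * (u 0 ⬝ᵥ u 0) := inv_quad_le hk h' (u 0)
    have h2 : w ⬝ᵥ (B'⁻¹ *ᵥ w) + 2 * b ^ 2 ≤ w ⬝ᵥ (C⁻¹ *ᵥ w) := by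
      have := inv_quad_ge hk hCt h w (B'⁻¹ *ᵥ w)
      rw [hCz, mulVec_mulVec w B', mul_nonsing_inv _ (coer_isUnit hk h'), one_mulVec,
        dotProduct_comm (B'⁻¹ *ᵥ w) w] at this
      linarith
    have h3 := avg_exp (a := w ⬝ᵥ (B'⁻¹ *ᵥ w)) (b := b) (c := q + k⁻¹ * ∑ j, u' j ⬝ᵥ u' j)
    rw [Fin.sum_univ_succ (fun j => u j ⬝ᵥ u j), mul_add]
    refine le_trans (le_of_eq ?_) (h3.trans (Real.exp_le_exp.2 (by linarith)))
    congr 3 <;> ring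

/-- Exponential moment of `-⟨S, B⁻¹ S⟩` for the shifted signed sum `S = w + ∑ ξ_j u_j`. Here the factor
`exp (2 ⟨u_j, B⁻¹ w⟩²)` is absorbed by increasing `B` by `4 u_j u_jᵀ`; by the rank-one update of the
inverse this is enough as long as `⟨u_j, B⁻¹ u_j⟩ ≤ 1/4`, which `B ⪰ 4` and `‖u_j‖ ≤ 1` ensure. -/
lemma ER_exp_neg_quad {d N : ℕ} (u : Fin N → Fin d → ℝ) (w : Fin d → ℝ)
    (B : Matrix (Fin d) (Fin d) ℝ) (hB : Bᵀ = B) {K k : ℝ} (hK : 4 ≤ K) (hk : 0 < k)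
    (hu : ∀ j, u j ⬝ᵥ u j ≤ 1) (hlo : ∀ z, K * (z ⬝ᵥ z) ≤ z ⬝ᵥ (B *ᵥ z))
    (h : ∀ z, z ⬝ᵥ ((B + (4 : ℝ) • ∑ j, vecMulVec (u j) (u j)) *ᵥ z) ≤ k * (z ⬝ᵥ z)) :
    ER N (fun ξ => Real.exp
        (-((w + ∑ j, sgn (ξ j) • u j) ⬝ᵥ (B⁻¹ *ᵥ (w + ∑ j, sgn (ξ j) • u j)))))
      ≤ Real.exp (-(w ⬝ᵥ ((B + (4 : ℝ) • ∑ j, vecMulVec (u j) (u j))⁻¹ *ᵥ w))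
        - k⁻¹ * ∑ j, u j ⬝ᵥ u j) := by
  have hK0 : 0 < K := by linarith
  induction N generalizing w with
  | zero => simp [ER_zero]
  | succ N ih =>
    set u' : Fin N → Fin d → ℝ := fun j => u j.succ with hu'
    set B' := B + (4 : ℝ) • ∑ j, vecMulVec (u' j) (u' j) with hB'
    have hC : B + (4 : ℝ) • ∑ j, vecMulVec (u j) (u j) = B' + (4 : ℝ) • vecMulVec (u 0) (u 0) := by
      rw [Fin.sum_univ_succ, smul_add, hB']; abel
    have hB't : B'ᵀ = B' := by
      rw [hB', transpose_add, transpose_smul, sum_vec_transpose, hB]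
    rw [hC] at h ⊢
    set C := B' + (4 : ℝ) • vecMulVec (u 0) (u 0) with hCdef
    have hCt : Cᵀ = C := by
      rw [hCdef, transpose_add, transpose_smul, transpose_vecMulVec, hB't]
    have hCz : ∀ z, z ⬝ᵥ (C *ᵥ z) = z ⬝ᵥ (B' *ᵥ z) + 4 * (u 0 ⬝ᵥ z) ^ 2 := by
      intro z
      rw [hCdef, add_mulVec, smul_mulVec, dotProduct_add, dotProduct_smul, mulVec_rank_one,
        smul_eq_mul]
    have hB'lo : ∀ z, K * (z ⬝ᵥ z) ≤ z ⬝ᵥ (B' *ᵥ z) := by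
      intro z
      rw [hB', add_mulVec, smul_mulVec, dotProduct_add, dotProduct_smul, sum_mulVec,
        dotProduct_sum]
      simp only [mulVec_rank_one]
      have : 0 ≤ ∑ j, (u' j ⬝ᵥ z) ^ 2 := sum_nonneg fun _ _ => sq_nonneg _
      have := hlo z
      rw [smul_eq_mul]
      linarith
    have hClo : ∀ z, K * (z ⬝ᵥ z) ≤ z ⬝ᵥ (C *ᵥ z) := by
      intro z
      rw [hCz]
      nlinarith [sq_nonneg (u 0 ⬝ᵥ z), hB'lo z]
    have h' : ∀ z, z ⬝ᵥ (B' *ᵥ z) ≤ k * (z ⬝ᵥ z) := by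
      intro z
      have h1 := h z
      rw [hCz] at h1
      nlinarith [sq_nonneg (u 0 ⬝ᵥ z)]
    have hstep : ∀ b : Bool, ER N (fun ξ => Real.exp
        (-((w + ∑ j, sgn ((Fin.cons b ξ : Fin (N + 1) → Bool) j) • u j) ⬝ᵥ
          (B⁻¹ *ᵥ (w + ∑ j, sgn ((Fin.cons b ξ : Fin (N + 1) → Bool) j) • u j)))))
        ≤ Real.exp (-((w + sgn b • u 0) ⬝ᵥ (B'⁻¹ *ᵥ (w + sgn b • u 0)))
          - k⁻¹ * ∑ j, u' j ⬝ᵥ u' j) := by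
      intro b
      simp only [Fin.sum_univ_succ, Fin.cons_zero, Fin.cons_succ, ← add_assoc]
      exact ih u' (w + sgn b • u 0) (fun j => hu j.succ) h'
    rw [ER_succ]
    have hQt := inv_symm hB't
    refine (div_le_div_of_nonneg_right (add_le_add (hstep true) (hstep false)) (by norm_num)).trans ?_
    rw [quad_pm hQt, quad_pm hQt]
    simp only [sgn, if_true, Bool.false_eq_true, if_false]
    set q := u 0 ⬝ᵥ (B'⁻¹ *ᵥ u 0) with hq
    set b := u 0 ⬝ᵥ (B'⁻¹ *ᵥ w) with hb
    have hBu := coer_isUnit hK0 hB'lo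
    have hCu := coer_isUnit hK0 hClo
    have h1 : k⁻¹ * (u 0 ⬝ᵥ u 0) ≤ q := by
      have a1 := inv_quad_ge hK0 hB't hB'lo (u 0) (k⁻¹ • u 0)
      have a2 := h' (k⁻¹ • u 0)
      simp only [dotProduct_smul, smul_dotProduct, smul_eq_mul] at a1 a2
      rw [mul_inv_cancel_left₀ hk.ne'] at a2
      linarith
    have hq0 : 0 ≤ q := le_trans (by have := dot_self_nonneg (u 0); positivity) h1
    have hq1 : q ≤ 1 / 4 := by
      refine (inv_quad_le hK0 hB'lo (u 0)).trans ?_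
      calc _ ≤ (4 : ℝ)⁻¹ * 1 := by
            have := dot_self_nonneg (u 0)
            have := hu 0
            gcongr
        _ = _ := by norm_num
    have h2 : w ⬝ᵥ (C⁻¹ *ᵥ w) ≤ w ⬝ᵥ (B'⁻¹ *ᵥ w) - 2 * b ^ 2 := by
      set z := C⁻¹ *ᵥ w with hz
      set a := u 0 ⬝ᵥ z with ha
      have hw : w = B' *ᵥ z + (4 * a) • u 0 := by
        have : C *ᵥ z = w := by rw [hz, mulVec_mulVec, mul_nonsing_inv _ hCu, one_mulVec]
        rw [← this, hCdef, add_mulVec, smul_mulVec, vecMulVec_mulVec, op_smul_eq_smul, smul_smul]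
      have hBz : B'⁻¹ *ᵥ (B' *ᵥ z) = z := by
        rw [mulVec_mulVec, nonsing_inv_mul _ hBu, one_mulVec]
      have e1 : w ⬝ᵥ z = z ⬝ᵥ (B' *ᵥ z) + 4 * a ^ 2 := by
        rw [hw, add_dotProduct, smul_dotProduct, smul_eq_mul, dotProduct_comm, ← ha]; ring
      have e2 : b = a + 4 * a * q := by
        rw [hb, hw, mulVec_add, hBz, mulVec_smul, dotProduct_add, dotProduct_smul, smul_eq_mul]
      have e3 : w ⬝ᵥ (B'⁻¹ *ᵥ w) = z ⬝ᵥ (B' *ᵥ z) + 8 * a ^ 2 + 16 * a ^ 2 * q := by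
        rw [hw, quad_pm hQt, hBz, dotProduct_comm (B' *ᵥ z) z]; ring
      rw [e1, e2, e3]
      have : 0 ≤ a ^ 2 * (1 / 16 - q ^ 2) := mul_nonneg (sq_nonneg _) (by nlinarith)
      nlinarith
    have h3 := avg_exp (a := -(w ⬝ᵥ (B'⁻¹ *ᵥ w))) (b := b) (c := -q - k⁻¹ * ∑ j, u' j ⬝ᵥ u' j)
    rw [Fin.sum_univ_succ (fun j => u j ⬝ᵥ u j), mul_add]
    refine le_trans (le_of_eq ?_) (h3.trans (Real.exp_le_exp.2 (by linarith)))
    rw [add_comm (Real.exp _)]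
    congr 3 <;> ring

lemma inv_smul_one {d : ℕ} {t : ℝ} (ht : 0 < t) :
    ((t⁻¹ • (1 : Matrix (Fin d) (Fin d) ℝ))⁻¹) = t • 1 := by
  apply inv_eq_left_inv
  rw [smul_mul_smul_comm, mul_inv_cancel₀ ht.ne', one_mul, one_smul]

lemma sum_dot_eq {d N : ℕ} {u : Fin N → Fin d → ℝ} (hu : ∑ j, vecMulVec (u j) (u j) = 1) :
    ∑ j, u j ⬝ᵥ u j = d := by
  have := congrArg trace hu
  simpa [trace_sum, trace_vecMulVec] using this

/-- Sub-exponential moments of `‖∑ ξ_j u_j‖²` when the `u_j` are the rows of an isometry. -/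
lemma ER_mgf {d N : ℕ} {u : Fin N → Fin d → ℝ} (hu : ∑ j, vecMulVec (u j) (u j) = 1)
    {t : ℝ} (ht : 0 < t) (ht4 : t ≤ 1 / 4) :
    ER N (fun ξ => Real.exp (t * ((∑ j, sgn (ξ j) • u j) ⬝ᵥ (∑ j, sgn (ξ j) • u j) - d)))
      ≤ Real.exp (4 * t ^ 2 * d) ∧
    ER N (fun ξ => Real.exp (-(t * ((∑ j, sgn (ξ j) • u j) ⬝ᵥ (∑ j, sgn (ξ j) • u j) - d))))
      ≤ Real.exp (4 * t ^ 2 * d) := by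
  have hsum := sum_dot_eq hu
  have hd0 : (0 : ℝ) ≤ d := Nat.cast_nonneg d
  have ht4' : 4 ≤ t⁻¹ := by rw [le_inv_comm₀ (by norm_num) ht]; linarith
  have hle : ∀ j, u j ⬝ᵥ u j ≤ 1 := by
    intro j
    have h1 : u j ⬝ᵥ ((∑ i, vecMulVec (u i) (u i)) *ᵥ u j) = u j ⬝ᵥ u j := by rw [hu, one_mulVec]
    rw [sum_mulVec, dotProduct_sum] at h1
    simp only [mulVec_rank_one] at h1
    have h2 := single_le_sum (f := fun i => (u i ⬝ᵥ u j) ^ 2) (fun _ _ => sq_nonneg _) (mem_univ j)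
    rw [h1] at h2
    have := dot_self_nonneg (u j)
    by_contra hc; push Not at hc; nlinarith
  have hBt : (t⁻¹ • (1 : Matrix (Fin d) (Fin d) ℝ))ᵀ = t⁻¹ • 1 := by simp
  constructor
  · have hk : 0 < t⁻¹ - 2 := by linarith
    have h1 := ER_exp_quad u 0 (t⁻¹ • 1) hBt hk (by
      intro z
      rw [hu, ← sub_smul, smul_mulVec, one_mulVec, dotProduct_smul, smul_eq_mul])
    rw [hsum] at h1
    simp only [inv_smul_one ht, smul_mulVec, one_mulVec, dotProduct_smul, smul_eq_mul, zero_add,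
      zero_dotProduct] at h1
    have e : ∀ ξ : Fin N → Bool,
        Real.exp (t * ((∑ j, sgn (ξ j) • u j) ⬝ᵥ (∑ j, sgn (ξ j) • u j) - d))
        = Real.exp (-(t * d)) *
          Real.exp (t * ((∑ j, sgn (ξ j) • u j) ⬝ᵥ (∑ j, sgn (ξ j) • u j))) := by
      intro ξ; rw [← Real.exp_add]; ring_nf
    simp only [e]
    rw [ER_mul]
    calc _ ≤ Real.exp (-(t * d)) * Real.exp ((t⁻¹ - 2)⁻¹ * d) := by gcongr
      _ = Real.exp (((t⁻¹ - 2)⁻¹ - t) * d) := by rw [← Real.exp_add]; ring_nf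
      _ ≤ _ := by
        gcongr
        have : (t⁻¹ - 2)⁻¹ = t / (1 - 2 * t) := by field_simp
        rw [this, sub_le_iff_le_add, div_le_iff₀ (by linarith)]
        nlinarith [pow_pos ht 2, pow_pos ht 3]
  · have hk : 0 < t⁻¹ + 4 := by linarith
    have h1 := ER_exp_neg_quad u 0 (t⁻¹ • 1) hBt ht4' hk hle (by
      intro z
      rw [smul_mulVec, one_mulVec, dotProduct_smul, smul_eq_mul]) (by
      intro z
      rw [hu, ← add_smul, smul_mulVec, one_mulVec, dotProduct_smul, smul_eq_mul])
    rw [hsum] at h1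
    simp only [inv_smul_one ht, smul_mulVec, one_mulVec, dotProduct_smul, smul_eq_mul, zero_add,
      zero_dotProduct, neg_zero, zero_sub] at h1
    have e : ∀ ξ : Fin N → Bool,
        Real.exp (-(t * ((∑ j, sgn (ξ j) • u j) ⬝ᵥ (∑ j, sgn (ξ j) • u j) - d)))
        = Real.exp (t * d) *
          Real.exp (-(t * ((∑ j, sgn (ξ j) • u j) ⬝ᵥ (∑ j, sgn (ξ j) • u j)))) := by
      intro ξ; rw [← Real.exp_add]; ring_nf
    simp only [e]
    rw [ER_mul]
    calc _ ≤ Real.exp (t * d) * Real.exp (-((t⁻¹ + 4)⁻¹ * d)) := by gcongr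
      _ = Real.exp ((t - (t⁻¹ + 4)⁻¹) * d) := by rw [← Real.exp_add]; ring_nf
      _ ≤ _ := by
        gcongr
        have : (t⁻¹ + 4)⁻¹ = t / (1 + 4 * t) := by field_simp
        rw [this, sub_le_comm, le_div_iff₀ (by linarith)]
        nlinarith [pow_pos ht 2, pow_pos ht 3]

open Classical in
/-- Tail bound for `‖∑ ξ_j u_j‖²` at the scale `√(d L)`. -/
lemma ER_tail {d N : ℕ} (hd : 0 < d) {u : Fin N → Fin d → ℝ}
    (hu : ∑ j, vecMulVec (u j) (u j) = 1) {L : ℝ} (hL : 0 < L) (hLd : L ≤ d) :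
    ER N (fun ξ => if |(∑ j, sgn (ξ j) • u j) ⬝ᵥ (∑ j, sgn (ξ j) • u j) - d| ≤ 13 * √(d * L)
      then 0 else 1) ≤ 2 * Real.exp (-(3 * L)) := by
  have hd' : (0 : ℝ) < d := by exact_mod_cast hd
  -- With this `t` the moment bound `4 t² d` equals `L / 4`, while the deviation `13 √(d L)` contributes
  -- `13 L / 4`, so that `3 L` remains; `L ≤ d` gives `t ≤ 1 / 4`.
  set t : ℝ := 1 / 4 * √(L / d) with ht
  have ht0 : 0 < t := by positivity
  have ht4 : t ≤ 1 / 4 := by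
    have : √(L / d) ≤ 1 := Real.sqrt_le_one.2 ((div_le_one hd').2 hLd)
    linarith
  obtain ⟨h1, h2⟩ := ER_mgf hu ht0 ht4
  have hts : t * (13 * √(d * L)) = 13 / 4 * L := by
    have : √(L / d) * √(d * L) = L := by
      rw [← Real.sqrt_mul (by positivity)]
      rw [show L / d * (d * L) = L ^ 2 by field_simp, Real.sqrt_sq hL.le]
    rw [ht]; linear_combination (13 / 4) * this
  have ht2 : 4 * t ^ 2 * d = L / 4 := by
    rw [ht, mul_pow, Real.sq_sqrt (by positivity)]; field_simp
  rw [ht2] at h1 h2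
  set Y : (Fin N → Bool) → ℝ := fun ξ => (∑ j, sgn (ξ j) • u j) ⬝ᵥ (∑ j, sgn (ξ j) • u j) - d
  calc _ ≤ ER N (fun ξ => Real.exp (-(13 / 4 * L)) *
        (Real.exp (t * Y ξ) + Real.exp (-(t * Y ξ)))) := ER_mono fun ξ => by
        split_ifs with hc
        · positivity
        · rw [mul_add, ← Real.exp_add, ← Real.exp_add]
          rw [not_le, lt_abs] at hc
          rcases hc with hc | hc
          · have : 0 ≤ -(13 / 4 * L) + t * Y ξ := by
              rw [← hts]; have := mul_lt_mul_of_pos_left hc ht0; linarith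
            have := Real.one_le_exp this
            have := Real.exp_pos (-(13 / 4 * L) + -(t * Y ξ))
            linarith
          · have : 0 ≤ -(13 / 4 * L) + -(t * Y ξ) := by
              rw [← hts]; have := mul_lt_mul_of_pos_left hc ht0; linarith
            have := Real.one_le_exp this
            have := Real.exp_pos (-(13 / 4 * L) + (t * Y ξ))
            linarith
    _ ≤ Real.exp (-(13 / 4 * L)) * (Real.exp (L / 4) + Real.exp (L / 4)) := by
        rw [ER_mul, ER_add]; gcongr
    _ = 2 * Real.exp (-(3 * L)) := by
        rw [← two_mul, mul_left_comm, ← Real.exp_add]; ring_nf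

/-! ### Whitening and the randomized Hadamard rotation -/

/-- A Gram matrix with invertible determinant is whitened by a congruence. -/
lemma exists_whiten {n p : ℕ} (X : Matrix (Fin n) (Fin p) ℝ) (hX : IsUnit (Xᵀ * X).det) :
    ∃ G : Matrix (Fin p) (Fin p) ℝ, IsUnit G.det ∧ Gᵀ * (Xᵀ * X) * G = 1 := by
  obtain ⟨U, l, h1, h2, h3⟩ := exists_spec (Xᵀ * X) (by simp)
  have hdiag : (X * U)ᵀ * (X * U) = diagonal l := by
    calc (X * U)ᵀ * (X * U) = Uᵀ * (Xᵀ * X) * U := by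
          rw [transpose_mul]; simp only [Matrix.mul_assoc]
      _ = (Uᵀ * U) * diagonal l * (Uᵀ * U) := by
          rw [h3, spec]; simp only [Matrix.mul_assoc]
      _ = _ := by rw [h1, one_mul, mul_one]
  have hl0 : ∀ i, 0 ≤ l i := by
    intro i
    have := congrFun (congrFun hdiag i) i
    rw [diagonal_apply_eq, mul_apply] at this
    rw [← this]
    exact sum_nonneg fun k _ => by rw [transpose_apply]; exact mul_self_nonneg _
  have hl : ∀ i, 0 < l i := by
    intro i
    refine lt_of_le_of_ne (hl0 i) fun h0 => hX.ne_zero ?_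
    rw [h3, spec, det_mul, det_mul, det_diagonal, prod_eq_zero (mem_univ i) h0.symm]; simp
  have hT : (spec U fun i => (√(l i))⁻¹)ᵀ = spec U fun i => (√(l i))⁻¹ := by
    rw [spec, transpose_mul, transpose_mul, transpose_transpose, diagonal_transpose,
      Matrix.mul_assoc]
  have hG : (spec U fun i => (√(l i))⁻¹) * (Xᵀ * X) * (spec U fun i => (√(l i))⁻¹) = 1 := by
    rw [h3, spec_mul h1, spec_mul h1, ← spec_one h2]
    congr 1
    funext i
    have : √(l i) ≠ 0 := (Real.sqrt_pos.2 (hl i)).ne'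
    nth_rewrite 2 [← Real.mul_self_sqrt (hl0 i)]
    field_simp
  refine ⟨_, ?_, by rw [hT]; exact hG⟩
  have := congrArg det hG
  rw [det_mul, det_one] at this
  exact IsUnit.of_mul_eq_one_right _ this

lemma samplingS_mul {n p m : ℕ} (M : Matrix (Fin n) (Fin p) ℝ) (ω : Fin m → Fin n) :
    samplingS (fun _ => (n : ℝ)⁻¹) ω * M
      = Matrix.of fun s k => 1 / √(m * (n : ℝ)⁻¹) * M (ω s) k := by
  ext s k
  simp [mul_apply, samplingS]

lemma samplingS_mulVec {n m : ℕ} (z : Fin n → ℝ) (ω : Fin m → Fin n) (s : Fin m) :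
    (samplingS (fun _ => (n : ℝ)⁻¹) ω *ᵥ z) s = 1 / √(m * (n : ℝ)⁻¹) * z (ω s) := by
  simp [mulVec, dotProduct, samplingS]

lemma coef_sq {n m : ℕ} :
    1 / √(m * (n : ℝ)⁻¹) * (1 / √(m * (n : ℝ)⁻¹)) = (m : ℝ)⁻¹ * n := by
  rw [div_mul_div_comm, Real.mul_self_sqrt (by positivity), one_mul, one_div, mul_inv, inv_inv]

lemma sk_apply {n d m : ℕ} (u : Fin n → Fin d → ℝ) (ω : Fin m → Fin n) (j k : Fin d) :
    sk u ω j k = ∑ s, (m : ℝ)⁻¹ * (n * (u (ω s) j * u (ω s) k)) := by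
  simp only [sk, Matrix.smul_apply, Matrix.sum_apply, vecMulVec_apply, smul_eq_mul, mul_sum]

lemma skv_apply {n d m : ℕ} (u : Fin n → Fin d → ℝ) (z : Fin n → ℝ) (ω : Fin m → Fin n)
    (k : Fin d) : skv u z ω k = ∑ s, (m : ℝ)⁻¹ * (n * z (ω s) * u (ω s) k) := by
  simp only [skv, Pi.smul_apply, Finset.sum_apply, smul_eq_mul, mul_sum]

lemma sk_sampling {n p m : ℕ} (M : Matrix (Fin n) (Fin p) ℝ) (ω : Fin m → Fin n) :
    sk M ω = (samplingS (fun _ => (n : ℝ)⁻¹) ω * M)ᵀ * (samplingS (fun _ => (n : ℝ)⁻¹) ω * M) := by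
  ext j k
  rw [samplingS_mul, mul_apply]
  refine (sk_apply M ω j k).trans ?_
  simp only [transpose_apply, of_apply]
  refine sum_congr rfl fun s _ => ?_
  rw [← mul_assoc, ← coef_sq (n := n) (m := m)]; ring

lemma skv_sampling {n p m : ℕ} (M : Matrix (Fin n) (Fin p) ℝ) (z : Fin n → ℝ) (ω : Fin m → Fin n) :
    skv M z ω = (samplingS (fun _ => (n : ℝ)⁻¹) ω * M)ᵀ *ᵥ
      (samplingS (fun _ => (n : ℝ)⁻¹) ω *ᵥ z) := by
  ext k
  rw [samplingS_mul, mulVec, dotProduct]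
  refine (skv_apply M z ω k).trans ?_
  simp only [transpose_apply, of_apply, samplingS_mulVec]
  refine sum_congr rfl fun s _ => ?_
  calc _ = ((m : ℝ)⁻¹ * n) * (z (ω s) * M (ω s) k) := by ring
    _ = _ := by rw [← coef_sq]; ring

/-- The orthogonal matrix `H D(ξ) / √n`. -/
def rotHD {n : ℕ} (H : Matrix (Fin n) (Fin n) ℝ) (ξ : Fin n → Bool) : Matrix (Fin n) (Fin n) ℝ :=
  (Real.sqrt n)⁻¹ • (H * Dsgn ξ)

lemma sgn_mul_self (b : Bool) : sgn b * sgn b = 1 := by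
  cases b <;> simp [sgn]

lemma rotHD_orth {n : ℕ} (hn : 0 < n) {H : Matrix (Fin n) (Fin n) ℝ}
    (hH : Hᵀ * H = (n : ℝ) • (1 : Matrix (Fin n) (Fin n) ℝ)) (ξ : Fin n → Bool) :
    (rotHD H ξ)ᵀ * rotHD H ξ = 1 := by
  have hn' : (0 : ℝ) < n := by exact_mod_cast hn
  have : (H * Dsgn ξ)ᵀ * (H * Dsgn ξ) = (n : ℝ) • (1 : Matrix (Fin n) (Fin n) ℝ) := by
    calc _ = (Dsgn ξ)ᵀ * (Hᵀ * H) * Dsgn ξ := by rw [transpose_mul]; simp only [Matrix.mul_assoc]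
      _ = (n : ℝ) • ((Dsgn ξ) * Dsgn ξ) := by
        rw [hH, Dsgn, diagonal_transpose]; simp
      _ = _ := by
        rw [Dsgn, diagonal_mul_diagonal]
        simp only [sgn_mul_self]; rw [diagonal_one]
  rw [rotHD, transpose_smul, smul_mul_smul_comm, this, smul_smul, ← mul_inv,
    Real.mul_self_sqrt hn'.le, inv_mul_cancel₀ hn'.ne', one_smul]

lemma XHD_eq {n p : ℕ} (H : Matrix (Fin n) (Fin n) ℝ) (X : Matrix (Fin n) (Fin p) ℝ)
    (ξ : Fin n → Bool) : XHD H X ξ = rotHD H ξ * X := by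
  rw [XHD, rotHD, smul_mul]

lemma yHD_eq {n : ℕ} (H : Matrix (Fin n) (Fin n) ℝ) (y : Fin n → ℝ)
    (ξ : Fin n → Bool) : yHD H y ξ = rotHD H ξ *ᵥ y := by
  rw [yHD, rotHD, smul_mulVec, mulVec_mulVec]

lemma sum_vec_rows {n p : ℕ} (M : Matrix (Fin n) (Fin p) ℝ) :
    ∑ i, vecMulVec (M i) (M i) = Mᵀ * M := by
  ext j k
  simp [Matrix.sum_apply, vecMulVec_apply, mul_apply]

lemma olsResid_orth {n p : ℕ} (X : Matrix (Fin n) (Fin p) ℝ) (y : Fin n → ℝ)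
    (hX : IsUnit (Xᵀ * X).det) : Xᵀ *ᵥ olsResid X y = 0 := by
  rw [olsResid, olsSol, mulVec_sub, mulVec_mulVec, mulVec_mulVec,
    mul_nonsing_inv _ hX, one_mulVec, sub_self]

lemma dot_orth {n k : ℕ} {Q : Matrix (Fin n) (Fin k) ℝ} (hQ : Qᵀ * Q = 1) (x : Fin k → ℝ) :
    (Q *ᵥ x) ⬝ᵥ (Q *ᵥ x) = x ⬝ᵥ x := by
  rw [dotProduct_mulVec, ← mulVec_transpose, mulVec_mulVec, hQ, one_mulVec]

/-- Loss in whitened coordinates. -/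
lemma lossL_whiten {n p : ℕ} (X : Matrix (Fin n) (Fin p) ℝ) (y : Fin n → ℝ)
    (hX : IsUnit (Xᵀ * X).det) {G : Matrix (Fin p) (Fin p) ℝ}
    (hG : Gᵀ * (Xᵀ * X) * G = 1) (γ : Fin p → ℝ) :
    lossL X y (olsSol X y + G *ᵥ γ) = olsResid X y ⬝ᵥ olsResid X y + γ ⬝ᵥ γ := by
  have hG' : (X * G)ᵀ * (X * G) = 1 := by
    rw [← hG, transpose_mul]; simp only [Matrix.mul_assoc]
  have e : y - X *ᵥ (olsSol X y + G *ᵥ γ) = olsResid X y - (X * G) *ᵥ γ := by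
    rw [mulVec_add, olsResid, mulVec_mulVec]; abel
  have h0 : ((X * G) *ᵥ γ) ⬝ᵥ olsResid X y = 0 := by
    rw [← mulVec_mulVec, dotProduct_comm, dotProduct_mulVec, ← mulVec_transpose, olsResid_orth X y hX,
      zero_dotProduct]
  rw [lossL, e]
  simp only [dotProduct_sub, sub_dotProduct]
  rw [h0, dotProduct_comm (olsResid X y) ((X * G) *ᵥ γ), h0, dot_orth hG']; ring

/-- The sketched estimator in whitened coordinates. -/
lemma betaSRHT_whiten {n p m : ℕ} (H : Matrix (Fin n) (Fin n) ℝ) (X : Matrix (Fin n) (Fin p) ℝ)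
    (y : Fin n → ℝ) {G : Matrix (Fin p) (Fin p) ℝ} (hGu : IsUnit G.det)
    (z : (Fin m → Fin n) × (Fin n → Bool)) (hg : Good (XHD H X z.2 * G) z.1) :
    IsUnit ((samplingS (fun _ => (n : ℝ)⁻¹) z.1 * XHD H X z.2)ᵀ *
      (samplingS (fun _ => (n : ℝ)⁻¹) z.1 * XHD H X z.2)).det ∧
    betaSRHT H X y z = olsSol X y
      + G *ᵥ skγ (XHD H X z.2 * G) (rotHD H z.2 *ᵥ olsResid X y) z.1 := by
  have hu := hg.isUnit
  set S := samplingS (fun _ => (n : ℝ)⁻¹) z.1 with hS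
  set A := XHD H X z.2 with hA
  set M := (S * A)ᵀ * (S * A) with hM
  have hsk : sk (A * G) z.1 = Gᵀ * M * G := by
    rw [sk_sampling, ← hS, ← Matrix.mul_assoc S A G, transpose_mul (S * A) G, hM]
    simp only [Matrix.mul_assoc]
  have hMu : IsUnit M.det := by
    rw [hsk, det_mul, det_mul] at hu
    exact isUnit_of_mul_isUnit_right (isUnit_of_mul_isUnit_left hu)
  refine ⟨hMu, ?_⟩
  have hGt : IsUnit (Gᵀ).det := by rwa [det_transpose]
  have hy : yHD H y z.2 = A *ᵥ olsSol X y + rotHD H z.2 *ᵥ olsResid X y := by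
    rw [yHD_eq, hA, XHD_eq, ← mulVec_mulVec, ← mulVec_add, olsResid]; congr 1; abel
  have hb : betaSRHT H X y z = M⁻¹ *ᵥ ((S * A)ᵀ *ᵥ (S *ᵥ yHD H y z.2)) := rfl
  rw [hb, hy, mulVec_add, mulVec_add, mulVec_add]
  congr 1
  · rw [mulVec_mulVec _ S A, mulVec_mulVec _ ((S * A)ᵀ), ← hM, mulVec_mulVec,
      nonsing_inv_mul _ hMu, one_mulVec]
  · have hγ : skγ (A * G) (rotHD H z.2 *ᵥ olsResid X y) z.1
        = (sk (A * G) z.1)⁻¹ *ᵥ skv (A * G) (rotHD H z.2 *ᵥ olsResid X y) z.1 := rfl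
    rw [hγ, hsk, skv_sampling, ← hS, ← Matrix.mul_assoc S A G, transpose_mul (S * A) G,
      Matrix.mul_inv_rev, Matrix.mul_inv_rev, ← mulVec_mulVec _ Gᵀ, mulVec_mulVec _ G, mulVec_mulVec _ _ Gᵀ]
    congr 1
    rw [← Matrix.mul_assoc, mul_nonsing_inv _ hGu, one_mul, Matrix.mul_assoc,
      nonsing_inv_mul _ hGt, mul_one]

/-- `n` times a leverage score of the rotated design is a quadratic form in the signs. -/
lemma row_lev {n p : ℕ} (hn : 0 < n) (H : Matrix (Fin n) (Fin n) ℝ) (X : Matrix (Fin n) (Fin p) ℝ)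
    (G : Matrix (Fin p) (Fin p) ℝ) (ξ : Fin n → Bool) (i : Fin n) :
    n * ((XHD H X ξ * G) i ⬝ᵥ (XHD H X ξ * G) i)
      = (∑ j, sgn (ξ j) • (H i j • (X * G) j)) ⬝ᵥ (∑ j, sgn (ξ j) • (H i j • (X * G) j)) := by
  have hn' : (0 : ℝ) < n := by exact_mod_cast hn
  have e : (XHD H X ξ * G) i = (√(n : ℝ))⁻¹ • ∑ j, sgn (ξ j) • (H i j • (X * G) j) := by
    ext k
    rw [XHD, smul_mul, Matrix.mul_assoc, Dsgn, Matrix.smul_apply, mul_apply, Pi.smul_apply,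
      Finset.sum_apply]
    congr 1
    refine sum_congr rfl fun j _ => ?_
    rw [mul_diagonal]; simp only [Pi.smul_apply, smul_eq_mul]; ring
  rw [e, smul_dotProduct, dotProduct_smul, smul_eq_mul, smul_eq_mul, ← mul_assoc, ← mul_assoc,
    mul_assoc (n : ℝ), ← mul_inv, Real.mul_self_sqrt hn'.le, mul_inv_cancel₀ hn'.ne', one_mul]

lemma signed_rows {n p : ℕ} {H : Matrix (Fin n) (Fin n) ℝ} (hH : ∀ i j, H i j = 1 ∨ H i j = -1)
    {V : Matrix (Fin n) (Fin p) ℝ} (hV : Vᵀ * V = 1) (i : Fin n) :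
    ∑ j, vecMulVec (H i j • V j) (H i j • V j) = 1 := by
  rw [← hV, ← sum_vec_rows]
  refine sum_congr rfl fun j _ => ?_
  rw [vecMulVec_smul, smul_vecMulVec, smul_smul]
  rcases hH i j with h | h <;> rw [h] <;> simp

/-- The leverage scores of the rotated design are uniform up to `σ / n`. -/
def LevGood {n p : ℕ} (U : Matrix (Fin n) (Fin p) ℝ) (σ : ℝ) : Prop :=
  ∀ i, |n * (U i ⬝ᵥ U i) - p| ≤ σ

open Classical in
/-- Union bound over the `n` rows. -/
lemma ER_levGood {n p : ℕ} (hn : 0 < n) (hp : 0 < p) {H : Matrix (Fin n) (Fin n) ℝ}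
    (hH : ∀ i j, H i j = 1 ∨ H i j = -1) (X : Matrix (Fin n) (Fin p) ℝ)
    {G : Matrix (Fin p) (Fin p) ℝ} (hG : Gᵀ * (Xᵀ * X) * G = 1) {L : ℝ} (hL : 0 < L) (hLp : L ≤ p) :
    ER n (fun ξ => if LevGood (XHD H X ξ * G) (13 * √(p * L)) then 0 else 1)
      ≤ n * (2 * Real.exp (-(3 * L))) := by
  have hV : (X * G)ᵀ * (X * G) = 1 := by
    rw [← hG, transpose_mul]; simp only [Matrix.mul_assoc]
  calc _ ≤ ER n (fun ξ => ∑ i, if |(∑ j, sgn (ξ j) • (H i j • (X * G) j)) ⬝ᵥ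
          (∑ j, sgn (ξ j) • (H i j • (X * G) j)) - p| ≤ 13 * √(p * L) then 0 else 1) := by
        refine ER_mono fun ξ => ?_
        simp only [LevGood, row_lev hn]
        split_ifs with hc
        · exact sum_nonneg fun i _ => by split_ifs <;> norm_num
        · push Not at hc
          obtain ⟨i, hi⟩ := hc
          refine le_trans ?_ (single_le_sum (fun i _ => ?_) (mem_univ i))
          · rw [if_neg (not_le.2 hi)]
          · split_ifs <;> norm_num
    _ ≤ ∑ i : Fin n, 2 * Real.exp (-(3 * L)) := by
        rw [ER_sum]
        exact sum_le_sum fun i _ => ER_tail hp (signed_rows hH hV i) hL hLp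
    _ = _ := by simp

/-- The rotated whitened design and residual satisfy the hypotheses of the fixed-sign analysis. -/
lemma flat_of_levGood {n p : ℕ} (hn : 0 < n) (hp : 0 < p) {H : Matrix (Fin n) (Fin n) ℝ}
    (hH : Hᵀ * H = (n : ℝ) • (1 : Matrix (Fin n) (Fin n) ℝ)) (X : Matrix (Fin n) (Fin p) ℝ)
    (y : Fin n → ℝ) (hX : IsUnit (Xᵀ * X).det)
    {G : Matrix (Fin p) (Fin p) ℝ} (hG : Gᵀ * (Xᵀ * X) * G = 1) {σ : ℝ} (hσ0 : 0 ≤ σ)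
    (hσ : σ ≤ 13 * p) (ξ : Fin n → Bool) (hs : LevGood (XHD H X ξ * G) σ) :
    Flat (XHD H X ξ * G) (rotHD H ξ *ᵥ olsResid X y) σ where
  hn := hn
  hd := hp
  hu := by
    rw [sum_vec_rows, XHD_eq, ← hG]
    calc _ = Gᵀ * (Xᵀ * ((rotHD H ξ)ᵀ * rotHD H ξ) * X) * G := by
          rw [transpose_mul, transpose_mul]; simp only [Matrix.mul_assoc]
      _ = _ := by rw [rotHD_orth hn hH, Matrix.mul_one]
  hr := by
    have : ∀ (M : Matrix (Fin n) (Fin p) ℝ) (z : Fin n → ℝ), ∑ i, z i • M i = Mᵀ *ᵥ z := by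
      intro M z
      ext k
      simp [mulVec, dotProduct, mul_comm]
    rw [this, mulVec_mulVec, XHD_eq]
    have e : (rotHD H ξ * X * G)ᵀ * rotHD H ξ = Gᵀ * (Xᵀ * ((rotHD H ξ)ᵀ * rotHD H ξ)) := by
      rw [transpose_mul, transpose_mul]; simp only [Matrix.mul_assoc]
    rw [e, rotHD_orth hn hH, Matrix.mul_one, ← mulVec_mulVec, olsResid_orth X y hX, mulVec_zero]
  hs := hs
  hσ0 := hσ0
  hσ := hσ

/-! ### Averaging over the signs -/

open Classical in
/-- The event on which the rotated leverage scores are flat and the sketched Gram matrix is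
well conditioned. -/
def goodEvent {n p : ℕ} (m : ℕ) (U : (Fin n → Bool) → Fin n → Fin p → ℝ) (Sg : (Fin n → Bool) → Prop) :
    Finset ((Fin m → Fin n) × (Fin n → Bool)) :=
  univ.filter fun z => Sg z.2 ∧ Good (U z.2) z.1

section combine

variable {n p m : ℕ} {U : (Fin n → Bool) → Fin n → Fin p → ℝ} {Sg : (Fin n → Bool) → Prop}

open Classical in
/-- Sums over the good event, computed by first averaging over the draws for fixed signs. -/
lemma sum_goodEvent (f : (Fin m → Fin n) × (Fin n → Bool) → ℝ) :
    ∑ z ∈ goodEvent m U Sg, srhtP n m z * f z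
      = ER n (fun ξ => if Sg ξ then EW n m (fun ω => (1 - badI (U ξ) ω) * f (ω, ξ)) else 0) := by
  rw [goodEvent, sum_filter, Fintype.sum_prod_type_right, ER, mul_sum]
  refine sum_congr rfl fun ξ _ => ?_
  by_cases hs : Sg ξ
  · simp only [hs, true_and, if_true, EW, mul_sum]
    refine sum_congr rfl fun ω _ => ?_
    by_cases hg : Good (U ξ) ω
    · simp only [hg, if_true, badI, srhtP, samplingP, prod_const, card_univ, Fintype.card_fin]
      ring
    · simp [hg, badI]
  · simp [hs]

open Classical in
lemma ER_ite_le {F : (Fin n → Bool) → ℝ} {c : ℝ} (h : ∀ ξ, Sg ξ → F ξ ≤ c) :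
    ER n (fun ξ => if Sg ξ then F ξ else 0) ≤ c * ER n (fun ξ => if Sg ξ then 1 else 0) := by
  rw [← ER_mul]
  refine ER_mono fun ξ => ?_
  split_ifs with hs
  · rw [mul_one]; exact h ξ hs
  · rw [mul_zero]

open Classical in
lemma le_ER_ite {F : (Fin n → Bool) → ℝ} {c : ℝ} (h : ∀ ξ, Sg ξ → c ≤ F ξ) :
    c * ER n (fun ξ => if Sg ξ then 1 else 0) ≤ ER n (fun ξ => if Sg ξ then F ξ else 0) := by
  rw [← ER_mul]
  refine ER_mono fun ξ => ?_
  split_ifs with hs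
  · rw [mul_one]; exact h ξ hs
  · rw [mul_zero]

open Classical in
lemma ER_compl :
    ER n (fun ξ => if Sg ξ then 1 else 0) = 1 - ER n (fun ξ => if Sg ξ then 0 else 1) := by
  have : ER n (fun ξ => (if Sg ξ then (1 : ℝ) else 0) + if Sg ξ then 0 else 1) = 1 := by
    have e : (fun ξ => (if Sg ξ then (1 : ℝ) else 0) + if Sg ξ then 0 else 1) = fun _ => 1 := by
      funext ξ; split_ifs <;> norm_num
    rw [e, ER]
    simp only [sum_const, card_univ, Fintype.card_fun, Fintype.card_bool, Fintype.card_fin,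
      nsmul_eq_mul, mul_one, Nat.cast_pow, Nat.cast_ofNat]
    rw [← mul_pow]; norm_num
  rw [ER_add] at this
  linarith

open Classical in
lemma prob_goodEvent (hn : 0 < n) {δ : ℝ} (hδ0 : 0 ≤ δ) (hδ1 : δ ≤ 1)
    (hS : ER n (fun ξ => if Sg ξ then 0 else 1) ≤ δ / 2)
    (hb : ∀ ξ, Sg ξ → EW n m (badI (U ξ)) ≤ δ / 2) :
    1 - δ ≤ eventProb (srhtP n m) (goodEvent m U Sg) ∧
    eventProb (srhtP n m) (goodEvent m U Sg) ≤ ER n (fun ξ => if Sg ξ then 1 else 0) ∧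
    ER n (fun ξ => if Sg ξ then 1 else 0) ≤ 1 := by
  have e : eventProb (srhtP n m) (goodEvent m U Sg)
      = ER n (fun ξ => if Sg ξ then 1 - EW n m (badI (U ξ)) else 0) := by
    have := sum_goodEvent (m := m) (U := U) (Sg := Sg) (fun _ => 1)
    simp only [mul_one] at this
    rw [eventProb, this]
    simp only [EW_sub, EW_const hn]
  have h1 : 1 - δ / 2 ≤ ER n (fun ξ => if Sg ξ then 1 else 0) := by rw [ER_compl]; linarith
  refine ⟨?_, ?_, ?_⟩
  · rw [e]
    refine le_trans ?_ (le_ER_ite (c := 1 - δ / 2) fun ξ hs => by linarith [hb ξ hs])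
    nlinarith
  · rw [e]
    refine (ER_ite_le (c := 1) fun ξ hs => ?_).trans (by rw [one_mul])
    linarith [EW_nonneg (badI_nonneg (m := m) (U ξ))]
  · rw [ER_compl]
    have : 0 ≤ ER n (fun ξ => if Sg ξ then (0 : ℝ) else 1) := by
      unfold ER
      have : 0 ≤ ∑ ξ, (if Sg ξ then (0 : ℝ) else 1) :=
        sum_nonneg fun ξ _ => by split_ifs <;> norm_num
      positivity
    linarith

open Classical in
/-- A uniform fixed-sign bound on the means of all `⟨x, γ⟩` bounds the norm of the conditional mean of
`γ`, by taking for `x` that conditional mean. -/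
lemma condExp_bias (hn : 0 < n) {δ : ℝ} (hδ0 : 0 ≤ δ) (hδ1 : δ ≤ 1 / 2)
    (hS : ER n (fun ξ => if Sg ξ then 0 else 1) ≤ δ / 2)
    (hb : ∀ ξ, Sg ξ → EW n m (badI (U ξ)) ≤ δ / 2)
    (γ : (Fin m → Fin n) × (Fin n → Bool) → Fin p → ℝ) {E R : ℝ} (hE : 0 ≤ E) (hR : 0 ≤ R)
    (h : ∀ ξ, Sg ξ → ∀ x : Fin p → ℝ,
      EW n m (fun ω => (1 - badI (U ξ) ω) * (x ⬝ᵥ γ (ω, ξ))) ≤ E * (√(x ⬝ᵥ x) * √R)) :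
    condExp (srhtP n m) (goodEvent m U Sg) γ ⬝ᵥ condExp (srhtP n m) (goodEvent m U Sg) γ
      ≤ (2 * E) ^ 2 * R := by
  obtain ⟨h1, h2, h3⟩ := prob_goodEvent (m := m) (U := U) (Sg := Sg) hn hδ0 (by linarith) hS hb
  set P := eventProb (srhtP n m) (goodEvent m U Sg) with hP
  set x := condExp (srhtP n m) (goodEvent m U Sg) γ with hx
  have hP2 : 1 / 2 ≤ P := by linarith
  have hP0 : 0 < P := by linarith
  have hPi : P⁻¹ ≤ 2 := by rw [inv_le_comm₀ hP0 (by norm_num)]; linarith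
  set c := E * (√(x ⬝ᵥ x) * √R) with hc
  have hc0 : 0 ≤ c := by positivity
  have e : x ⬝ᵥ x = P⁻¹ * ER n (fun ξ => if Sg ξ then
      EW n m (fun ω => (1 - badI (U ξ) ω) * (x ⬝ᵥ γ (ω, ξ))) else 0) := by
    rw [← sum_goodEvent (fun z => x ⬝ᵥ γ z)]
    nth_rewrite 2 [hx]
    rw [condExp, dotProduct_smul, dotProduct_sum, smul_eq_mul, ← hP]
    simp only [dotProduct_smul, smul_eq_mul]
  have h4 : x ⬝ᵥ x ≤ 2 * c := by
    rw [e]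
    have : ER n (fun ξ => if Sg ξ then
      EW n m (fun ω => (1 - badI (U ξ) ω) * (x ⬝ᵥ γ (ω, ξ))) else 0) ≤ c := by
      refine (ER_ite_le fun ξ hs => h ξ hs x).trans ?_
      nlinarith
    calc _ ≤ P⁻¹ * c := by gcongr
      _ ≤ 2 * c := by gcongr
  have hX := dot_self_nonneg x
  have hs := Real.mul_self_sqrt hX
  have hsR := Real.sq_sqrt hR
  have h5 : √(x ⬝ᵥ x) ≤ 2 * E * √R := by
    rcases (Real.sqrt_nonneg (x ⬝ᵥ x)).eq_or_lt with h0 | h0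
    · rw [← h0]; positivity
    · refine le_of_mul_le_mul_right ?_ h0
      rw [hs]; linarith
  calc x ⬝ᵥ x = √(x ⬝ᵥ x) ^ 2 := (Real.sq_sqrt hX).symm
    _ ≤ (2 * E * √R) ^ 2 := by gcongr
    _ = _ := by rw [mul_pow, hsR]

open Classical in
/-- The term `2 δ V` is the effect of normalising by the probability of the event, which lies within `δ`
of the probability that the signs are good. -/
lemma condExp_variance (hn : 0 < n) {δ : ℝ} (hδ0 : 0 ≤ δ) (hδ1 : δ ≤ 1 / 2)
    (hS : ER n (fun ξ => if Sg ξ then 0 else 1) ≤ δ / 2)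
    (hb : ∀ ξ, Sg ξ → EW n m (badI (U ξ)) ≤ δ / 2)
    (f : (Fin m → Fin n) × (Fin n → Bool) → ℝ) {E V : ℝ} (hE : 0 ≤ E) (hV : 0 ≤ V)
    (h : ∀ ξ, Sg ξ → |EW n m (fun ω => (1 - badI (U ξ) ω) * f (ω, ξ)) - V| ≤ E) :
    |condExp (srhtP n m) (goodEvent m U Sg) f - V| ≤ 2 * E + 2 * δ * V := by
  obtain ⟨h1, h2, h3⟩ := prob_goodEvent (m := m) (U := U) (Sg := Sg) hn hδ0 (by linarith) hS hb
  have hce : condExp (srhtP n m) (goodEvent m U Sg) f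
      = (eventProb (srhtP n m) (goodEvent m U Sg))⁻¹ * ER n (fun ξ => if Sg ξ then
      EW n m (fun ω => (1 - badI (U ξ) ω) * f (ω, ξ)) else 0) := by
    rw [← sum_goodEvent f]; rfl
  rw [hce]
  have up := ER_ite_le (c := V + E) fun ξ (hs : Sg ξ) => show
    EW n m (fun ω => (1 - badI (U ξ) ω) * f (ω, ξ)) ≤ V + E by linarith [(abs_le.1 (h ξ hs)).2]
  have lo := le_ER_ite (c := V - E) fun ξ (hs : Sg ξ) => show
    V - E ≤ EW n m (fun ω => (1 - badI (U ξ) ω) * f (ω, ξ)) by linarith [(abs_le.1 (h ξ hs)).1]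
  set P := eventProb (srhtP n m) (goodEvent m U Sg) with hP
  set J := ER n (fun ξ => if Sg ξ then EW n m (fun ω => (1 - badI (U ξ) ω) * f (ω, ξ)) else 0)
  set e := ER n (fun ξ => if Sg ξ then (1 : ℝ) else 0)
  have hP2 : 1 / 2 ≤ P := by linarith
  have hP0 : 0 < P := by linarith
  have e1 : P⁻¹ * J - V = P⁻¹ * (J - P * V) := by field_simp
  have hPi : P⁻¹ ≤ 2 := by rw [inv_le_comm₀ hP0 (by norm_num)]; linarith
  have e2 : |J - P * V| ≤ E + δ * V := by
    have he : 0 ≤ e := by linarith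
    have a1 : E * e ≤ E := mul_le_of_le_one_right hE h3
    have a2 : (e - P) * V ≤ δ * V := by gcongr; linarith
    have a3 : 0 ≤ (e - P) * V := mul_nonneg (by linarith) hV
    rw [abs_le]
    constructor <;> nlinarith
  rw [e1, abs_mul, abs_of_pos (inv_pos.2 hP0)]
  calc _ ≤ 2 * (E + δ * V) := by gcongr
    _ = _ := by ring

end combine

/-- Half of the exponent `m / (196 p)` makes the failure probability at most of order `δ`; the other half
is spent on a further factor `p / m`, through `e^{-x} ≤ 1 / x`. -/
lemma failure_le {p m : ℕ} (hp : 0 < p) {δ : ℝ} (hδ0 : 0 < δ) (hδ1 : δ ≤ 1 / 27)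
    (hm : 784 * p * Real.log (p / δ) ≤ m) :
    784 * (p : ℝ) ≤ m ∧
    p * Real.exp (-(m / (196 * p))) ≤ 392 * δ * (p / m) := by
  have hp1 : (1 : ℝ) ≤ p := by exact_mod_cast hp
  have hpd : 3 ≤ p / δ := by rw [le_div_iff₀ hδ0]; linarith
  have hl : 1 ≤ Real.log (p / δ) := by
    rw [Real.le_log_iff_exp_le (by positivity)]
    exact Real.exp_one_lt_three.le.trans hpd
  have h1 : 784 * (p : ℝ) ≤ m := by
    refine le_trans ?_ hm
    exact le_mul_of_one_le_right (by positivity) hl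
  refine ⟨h1, ?_⟩
  have hm0 : (0 : ℝ) < m := by linarith
  set x : ℝ := m / (392 * p) with hx
  have hx0 : 0 < x := by positivity
  have e : Real.exp (-(m / (196 * p))) = Real.exp (-x) * Real.exp (-x) := by
    rw [← Real.exp_add]; congr 1; rw [hx]; field_simp; norm_num
  have hx1 : Real.log (p / δ) ≤ x := by
    rw [hx, le_div_iff₀ (by positivity)]
    have : 0 ≤ p * Real.log (p / δ) := by positivity
    linarith
  have h2 : Real.exp (-x) ≤ δ / p := by
    calc _ ≤ Real.exp (-Real.log (p / δ)) := by gcongr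
      _ = _ := by rw [Real.exp_neg, Real.exp_log (by positivity), inv_div]
  have h3 : Real.exp (-x) ≤ x⁻¹ := by
    rw [Real.exp_neg]
    have := Real.add_one_le_exp x
    gcongr; linarith
  rw [e]
  calc _ ≤ p * (δ / p * x⁻¹) := by gcongr
    _ = _ := by rw [hx]; field_simp

/-! ### Size conditions and the error term -/

lemma delta_mul_cube_le {n : ℕ} (hn : 3 ≤ n) {α δ : ℝ} (hα : 0 < α)
    (h : δ ≤ (n : ℝ) ^ (-(3 + α))) : δ * (n : ℝ) ^ 3 ≤ 1 := by
  have hn' : (3 : ℝ) ≤ n := by exact_mod_cast hn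
  have h1 : (n : ℝ) ^ (-(3 + α)) ≤ (n : ℝ) ^ (-((3 : ℕ) : ℝ)) :=
    Real.rpow_le_rpow_of_exponent_le (by linarith) (by push_cast; linarith)
  rw [Real.rpow_neg (y := ((3 : ℕ) : ℝ)) (by linarith), Real.rpow_natCast] at h1
  have h3 : (0 : ℝ) < (n : ℝ) ^ 3 := by positivity
  calc δ * (n : ℝ) ^ 3 ≤ ((n : ℝ) ^ 3)⁻¹ * (n : ℝ) ^ 3 := by gcongr; exact h.trans h1
    _ = 1 := inv_mul_cancel₀ h3.ne'

lemma one_le_log_ratio {n : ℕ} (hn : 3 ≤ n) : 1 ≤ Real.log n / Real.log (Real.log n) := by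
  have hn' : (3 : ℝ) ≤ n := by exact_mod_cast hn
  have h1 : 1 < Real.log n := by
    rw [Real.lt_log_iff_exp_lt (by linarith)]
    exact Real.exp_one_lt_three.trans_le hn'
  have h2 : 0 < Real.log (Real.log n) := Real.log_pos h1
  rw [one_le_div h2]
  exact (Real.log_le_sub_one_of_pos (by linarith)).trans (by linarith)

/-- The two error terms of the analysis are dominated by the error of the theorem, since the
factor `log n / log log n` is at least one. -/
lemma error_le {n p m : ℕ} (hn : 3 ≤ n) (hm : 0 < m) {L : ℝ} (hpL : 1 ≤ (p : ℝ) * L) {δ : ℝ}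
    (hδp : δ * p ≤ 1) {ε : ℝ}
    (hε : ε = Real.log n / Real.log (Real.log n) * √((p : ℝ) ^ 3 / m ^ 3) + √(p * L) / m) :
    2 * (75 / m + 13 * √(p * L) / m + 2600 * (p / m * √(p / m))) ≤ 200000 * ε ∧
    2 * (5488 / m + 13 * √(p * L) / m + 72014 * (p / m * √(p / m))) + 2 * δ * (p / m)
      ≤ 200000 * ε := by
  have hm' : (0 : ℝ) < m := by exact_mod_cast hm
  have h1 : √((p : ℝ) ^ 3 / m ^ 3) = p / m * √(p / m) := by
    have e : (p : ℝ) ^ 3 / m ^ 3 = (p / m) ^ 2 * (p / m) := by field_simp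
    rw [e, Real.sqrt_mul (by positivity), Real.sqrt_sq (by positivity)]
  rw [h1] at hε
  set t := (p : ℝ) / m * √(p / m) with ht
  have ht0 : 0 ≤ t := by positivity
  have h2 := le_mul_of_one_le_left ht0 (one_le_log_ratio hn)
  set s := √(p * L) / m with hs
  have h3 : 1 / m ≤ s := by
    rw [hs]; gcongr; rw [Real.one_le_sqrt]; exact hpL
  have h4 : δ * (p / m) ≤ 1 / m := by
    rw [← mul_div_assoc]; gcongr
  have e1 : (75 : ℝ) / m = 75 * (1 / m) := by ring
  have e2 : (5488 : ℝ) / m = 5488 * (1 / m) := by ring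
  have e3 : 13 * √(p * L) / m = 13 * s := by rw [hs]; ring
  have hs0 : 0 ≤ s := by positivity
  rw [e1, e2, e3]
  constructor <;> linarith

lemma condExp_affine {Ω : Type*} {p q : ℕ} (P : Ω → ℝ) (ζ : Finset Ω) (h0 : eventProb P ζ ≠ 0)
    (b : Fin p → ℝ) (G : Matrix (Fin p) (Fin q) ℝ) (γ : Ω → Fin q → ℝ) {f : Ω → Fin p → ℝ}
    (h : ∀ z ∈ ζ, f z = b + G *ᵥ γ z) :
    condExp P ζ f = b + G *ᵥ condExp P ζ γ := by
  have e : ∑ z ∈ ζ, P z • f z = eventProb P ζ • b + G *ᵥ ∑ z ∈ ζ, P z • γ z := by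
    rw [eventProb, sum_smul, mulVec_sum, ← sum_add_distrib]
    refine sum_congr rfl fun z hz => ?_
    rw [h z hz, smul_add, mulVec_smul]
  rw [condExp, e, smul_add, smul_smul, inv_mul_cancel₀ h0, one_smul, condExp, mulVec_smul]

lemma condExp_const_add {Ω : Type*} (P : Ω → ℝ) (ζ : Finset Ω) (h0 : eventProb P ζ ≠ 0)
    (c : ℝ) (g : Ω → ℝ) {f : Ω → ℝ} (h : ∀ z ∈ ζ, f z = c + g z) :
    condExp P ζ f = c + condExp P ζ g := by
  have e : ∑ z ∈ ζ, P z • f z = eventProb P ζ * c + ∑ z ∈ ζ, P z • g z := by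
    rw [eventProb, sum_mul, ← sum_add_distrib]
    refine sum_congr rfl fun z hz => ?_
    rw [h z hz, smul_add, smul_eq_mul]
  rw [condExp, e, smul_add, smul_eq_mul, inv_mul_cancel_left₀ h0, condExp]

/-- **Bias–variance of subsampled OLS under SRHT** (Corollary 4.7): there are
absolute constants `C, C' > 0` such that, for a Hadamard matrix `H` and `α > 0`
satisfying the row-norm condition for every `X_HD(ξ)`, for
`n e^{−p} < δ ≤ n^{−(3+α)}` and `m ≥ C p log(p/δ)`, there is an event `ζ` in
the joint sample space of probability at least `1 − δ` on which the sketched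
Gram matrices are invertible and `Bias_ζ(β̃_SRHT) ≤ ε² ‖r‖²` and
`|Var_ζ(β̃_SRHT) − (p/m) ‖r‖²| ≤ ε ‖r‖²`, where
`ε = C' ((log n/log log n) √(p³/m³) + √(p log(n/δ))/m)`. -/
theorem subsampled_ols_srht_bias_variance :
    ∃ C C' : ℝ, 0 < C ∧ 0 < C' ∧
      ∀ (n p m : ℕ) (X : Matrix (Fin n) (Fin p) ℝ) (y : Fin n → ℝ)
        (H : Matrix (Fin n) (Fin n) ℝ) (α : ℝ),
        1 ≤ p → p ≤ n → 3 ≤ n →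
        IsUnit (Xᵀ * X).det →
        (∀ i j, H i j = 1 ∨ H i j = -1) →
        Hᵀ * H = (n : ℝ) • (1 : Matrix (Fin n) (Fin n) ℝ) →
        0 < α →
        (∀ (ξ : Fin n → Bool) (i : Fin n), XHD H X ξ i ≠ 0 →
          (n : ℝ) ^ (-α) ≤ (XHD H X ξ i ⬝ᵥ XHD H X ξ i) / frobNorm (XHD H X ξ) ^ 2) →
        ∀ δ : ℝ, (n : ℝ) * Real.exp (-(p : ℝ)) < δ → δ ≤ (n : ℝ) ^ (-(3 + α)) →
        C * p * Real.log (p / δ) ≤ m →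
        ∃ ζ : Finset ((Fin m → Fin n) × (Fin n → Bool)),
          1 - δ ≤ eventProb (srhtP n m) ζ ∧
          (∀ z ∈ ζ,
            IsUnit ((samplingS (fun _ => (n : ℝ)⁻¹) z.1 * XHD H X z.2)ᵀ *
              (samplingS (fun _ => (n : ℝ)⁻¹) z.1 * XHD H X z.2)).det) ∧
          lossL X y (condExp (srhtP n m) ζ (betaSRHT H X y)) -
              lossL X y (olsSol X y)
            ≤ (C' * ((Real.log n / Real.log (Real.log n)) *
                    Real.sqrt ((p : ℝ) ^ 3 / m ^ 3) +
                  Real.sqrt (p * Real.log (n / δ)) / m)) ^ 2 *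
              (olsResid X y ⬝ᵥ olsResid X y) ∧
          |condExp (srhtP n m) ζ (fun z => lossL X y (betaSRHT H X y z)) -
              lossL X y (olsSol X y) -
              (p : ℝ) / m * (olsResid X y ⬝ᵥ olsResid X y)|
            ≤ (C' * ((Real.log n / Real.log (Real.log n)) *
                    Real.sqrt ((p : ℝ) ^ 3 / m ^ 3) +
                  Real.sqrt (p * Real.log (n / δ)) / m)) *
              (olsResid X y ⬝ᵥ olsResid X y) := by
  classical
  refine ⟨784, 200000, by norm_num, by norm_num, ?_⟩
  intro n p m X y H α hp hpn hn3 hX hH1 hH2 hα _ δ hδlow hδup hm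
  have hn0 : 0 < n := by omega
  have hp0 : 0 < p := hp
  have hn' : (3 : ℝ) ≤ n := by exact_mod_cast hn3
  have hp' : (1 : ℝ) ≤ p := by exact_mod_cast hp
  have hpn' : (p : ℝ) ≤ n := by exact_mod_cast hpn
  have hδ0 : 0 < δ := lt_of_le_of_lt (by positivity) hδlow
  have hδn := delta_mul_cube_le hn3 hα hδup
  have hδ27 : δ ≤ 1 / 27 := by
    have : δ * 3 ^ 3 ≤ δ * (n : ℝ) ^ 3 := by gcongr
    linarith
  have hδnp : δ * (n * (p : ℝ) ^ 2) ≤ 1 := by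
    refine le_trans ?_ hδn
    have : (p : ℝ) ^ 2 ≤ (n : ℝ) ^ 2 := by gcongr
    calc δ * (n * (p : ℝ) ^ 2) ≤ δ * (n * (n : ℝ) ^ 2) := by gcongr
      _ = _ := by ring
  have hδp : δ * p ≤ 1 := by
    refine le_trans ?_ hδnp
    have : 1 ≤ (n : ℝ) * p := by nlinarith
    calc δ * p ≤ δ * (p * (n * p)) := by gcongr; exact le_mul_of_one_le_right (by linarith) this
      _ = _ := by ring
  set L := Real.log (n / δ) with hL
  have hnδ : 0 < (n : ℝ) / δ := by positivity
  -- This is the hypothesis `n e^{-p} < δ`.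
  have hLp : L ≤ p := by
    rw [hL, Real.log_le_iff_le_exp hnδ, div_le_iff₀ hδ0]
    rw [Real.exp_neg, ← div_eq_mul_inv, div_lt_iff₀ (Real.exp_pos _)] at hδlow
    linarith
  have hL1 : 1 ≤ L := by
    rw [hL, Real.le_log_iff_exp_le hnδ]
    refine Real.exp_one_lt_three.le.trans ?_
    rw [le_div_iff₀ hδ0]; linarith
  have hpL : 1 ≤ (p : ℝ) * L := by nlinarith
  obtain ⟨hm784, hfail⟩ := failure_le hp0 hδ0 hδ27 hm
  have hm' : (0 : ℝ) < m := by linarith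
  have hm0 : 0 < m := by exact_mod_cast hm'
  have hpm : (p : ℝ) ≤ m := by linarith
  obtain ⟨G, hGu, hG⟩ := exists_whiten X hX
  set σ := 13 * √(p * L) with hσdef
  have hσ0 : 0 ≤ σ := by positivity
  have hσ : σ ≤ 13 * p := by
    have : √(p * L) ≤ p := by
      rw [Real.sqrt_le_left (by linarith)]; nlinarith
    linarith
  set U : (Fin n → Bool) → Fin n → Fin p → ℝ := fun ξ => XHD H X ξ * G with hU
  set Sg : (Fin n → Bool) → Prop := fun ξ => LevGood (XHD H X ξ * G) σ with hSg
  set r : (Fin n → Bool) → Fin n → ℝ := fun ξ => rotHD H ξ *ᵥ olsResid X y with hr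
  set R := olsResid X y ⬝ᵥ olsResid X y with hR
  have hR0 : 0 ≤ R := dot_self_nonneg _
  have hrR : ∀ ξ, r ξ ⬝ᵥ r ξ = R := fun ξ => dot_orth (rotHD_orth hn0 hH2 ξ) _
  have hflat : ∀ ξ, Sg ξ → Flat (U ξ) (r ξ) σ := fun ξ hs =>
    flat_of_levGood hn0 hp0 hH2 X y hX hG hσ0 hσ ξ hs
  have hq : ∀ ξ, Sg ξ → EW n m (badI (U ξ)) ≤ 392 * δ * (p / m) := fun ξ hs =>
    ((hflat ξ hs).EW_badI_le hm0).trans hfail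
  have hb : ∀ ξ, Sg ξ → EW n m (badI (U ξ)) ≤ δ / 2 := fun ξ hs => by
    refine (hq ξ hs).trans ?_
    have : (p : ℝ) / m ≤ 1 / 784 := by rw [div_le_div_iff₀ hm' (by norm_num)]; linarith
    calc 392 * δ * (p / m) ≤ 392 * δ * (1 / 784) := by gcongr
      _ = _ := by ring
  have hS : ER n (fun ξ => if Sg ξ then 0 else 1) ≤ δ / 2 := by
    refine (ER_levGood hn0 hp0 hH1 X hG (by linarith) hLp).trans ?_
    -- The per-row tail `2 (δ / n)³` leaves room for the union bound over `n` rows.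
    have e : Real.exp (-(3 * L)) = (δ / n) ^ 3 := by
      have : -(3 * L) = ((3 : ℕ) : ℝ) * -L := by push_cast; ring
      rw [this, Real.exp_nat_mul, Real.exp_neg, hL, Real.exp_log hnδ, inv_div]
    rw [e, div_pow]
    have h1 : δ ^ 3 ≤ δ * (1 / 27) ^ 2 := by
      calc δ ^ 3 = δ * δ ^ 2 := by ring
        _ ≤ _ := by gcongr
    have h2 : (9 : ℝ) ≤ (n : ℝ) ^ 2 := by nlinarith
    calc (n : ℝ) * (2 * (δ ^ 3 / n ^ 3)) = 2 * δ ^ 3 / n ^ 2 := by field_simp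
      _ ≤ 2 * (δ * (1 / 27) ^ 2) / 9 := by gcongr
      _ ≤ _ := by linarith
  set γ : (Fin m → Fin n) × (Fin n → Bool) → Fin p → ℝ := fun z => skγ (U z.2) (r z.2) z.1 with hγ
  have hmem : ∀ z ∈ goodEvent m U Sg, Good (U z.2) z.1 := fun z hz => by
    simp only [goodEvent, mem_filter] at hz
    exact hz.2.2
  have hβ := fun z (hz : z ∈ goodEvent m U Sg) => betaSRHT_whiten H X y hGu z (hmem z hz)
  have hP := (prob_goodEvent (m := m) (U := U) (Sg := Sg) hn0 hδ0.le (by linarith) hS hb).1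
  have hP0 : eventProb (srhtP n m) (goodEvent m U Sg) ≠ 0 := by linarith
  have hmean : condExp (srhtP n m) (goodEvent m U Sg) (betaSRHT H X y)
      = olsSol X y + G *ᵥ condExp (srhtP n m) (goodEvent m U Sg) γ :=
    condExp_affine _ _ hP0 _ _ _ fun z hz => (hβ z hz).2
  have hvar : condExp (srhtP n m) (goodEvent m U Sg) (fun z => lossL X y (betaSRHT H X y z))
      = R + condExp (srhtP n m) (goodEvent m U Sg) (fun z => γ z ⬝ᵥ γ z) :=
    condExp_const_add _ _ hP0 _ _ fun z hz => by
      rw [(hβ z hz).2]; exact lossL_whiten X y hX hG _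
  have hols : lossL X y (olsSol X y) = R := rfl
  obtain ⟨herr1, herr2⟩ := error_le hn3 hm0 hpL hδp rfl
  set ε := Real.log n / Real.log (Real.log n) * √((p : ℝ) ^ 3 / m ^ 3) + √(p * L) / m
  refine ⟨goodEvent m U Sg, hP, fun z hz => (hβ z hz).1, ?_, ?_⟩
  · rw [hmean, lossL_whiten X y hX hG, hols, add_sub_cancel_left]
    refine (condExp_bias hn0 hδ0.le (by linarith) hS hb γ (by positivity) hR0
      fun ξ hs x => ?_).trans (mul_le_mul_of_nonneg_right
        (pow_le_pow_left₀ (by positivity) herr1 2) hR0)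
    have := (hflat ξ hs).bias hm0 hpm hδ0.le hδnp (hq ξ hs) x
    rwa [hrR] at this
  · rw [hvar, hols, add_sub_cancel_left]
    have h1 := condExp_variance hn0 hδ0.le (by linarith) hS hb (fun z => γ z ⬝ᵥ γ z)
      (E := (5488 / m + 13 * √(p * L) / m + 72014 * (p / m * √(p / m))) * R) (V := p / m * R)
      (by positivity) (by positivity) fun ξ hs => by
        have := (hflat ξ hs).variance hm0 hpm hδnp (hq ξ hs)
        rwa [hrR] at this
    refine h1.trans (le_trans (le_of_eq ?_) (mul_le_mul_of_nonneg_right herr2 hR0))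
    ring

end
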